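/- A priori L_p estimate for the resolvent of the Laplacian: For every d ≥ 1 and p ∈ (1,∞) there exists a constant N = N(d,p) such that for every λ ≥ 0 and every u ∈ C_c^∞(ℝ^d) one has ‖D²u‖_{L_p(ℝ^d)} + √λ ‖Du‖_{L_p(ℝ^d)} + λ ‖u‖_{L_p(ℝ^d)} ≤ N ‖Δu − λu‖_{L_p(ℝ^d)}. (The paper states this for all u in the Sobolev space W²_p; this is equivalent by density of C_c^∞ in W²_p.) -/

import Mathlib

/-!
The proof is elementary and goes through random walks; neither the Fourier transform nor singular
integrals are used.

*Discrete Calderón–Zygmund estimate.* Let `A = avg w` be the transition operator of a lazy random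
walk on `ℝ^d` whose finite set of steps `w i` is symmetric, so that `A` is self-adjoint. For a
first difference `δ` along one of the steps and for `u`, `g` continuous with compact support,
`⟨δu, δg⟩` telescopes (`telescope`) into
`∑_{n < M} ⟨δ Aⁿ (u - A²u), δ Aⁿ g⟩ + ⟨δ A^M u, δ A^M g⟩`.
If `Q` is a nonnegative function on the closed quadrant such that `Q ± xy` are convex, then each
step of the walk lowers `∫ Q(f, g)` by at least a constant times `∫ |δf| |δg|` (`bellman_step`).
The explicit Bellman function `bel` has this property (`bel_convex`) and is bounded by a multiple of
`x^p + y^q`, so the sum is at most `C (‖u - A²u‖_p^p + ‖g‖_q^q)` (`bilinear`), while the remainder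
tends to `0` (`tendsto_dif_iter`). Choosing `g` proportional to `|s|^{p-2} s`, where `s = δ*δu` is
a second difference, gives `‖δ*δu‖_p ≤ C ‖u - Au‖_p` (`sdif_Lp`), with a constant independent of
the lengths of the steps.

*Passage to the limit.* For the steps `h (±e_i ± e_j)`, `h⁻² (u - A u)` converges to
`-(2d)⁻¹ Δu` as `h → 0`, and the second differences converge to second derivatives. Polarisation
yields `‖D_{ij}u‖_p ≤ C ‖Δu‖_p` (`D2_Lp`). Since `A` is a contraction of `L_p`, its generator is
dissipative, whence `λ ‖u‖_p ≤ ‖Δu - λu‖_p` (`dissipative`) and `‖Δu‖_p ≤ 2 ‖Δu - λu‖_p`.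

*Gradient.* Discrete Taylor expansion gives `‖D_v u‖_p ≤ 2 ‖u‖_p + ‖D_{vv} u‖_p` for every vector
`v` (`fderiv_Lp`); the choice `v = λ^{-1/2} e_i` bounds `√λ ‖D_i u‖_p` (`D1_Lp`).
-/

open MeasureTheory ENNReal

noncomputable section

/-- The first partial derivative `D_i u` on `ℝ^d` (Euclidean space). -/
def D1 (d : ℕ) (u : EuclideanSpace ℝ (Fin d) → ℝ) (i : Fin d)
    (x : EuclideanSpace ℝ (Fin d)) : ℝ :=
  fderiv ℝ u x (EuclideanSpace.single i 1)

/-- The second partial derivative `D_{ij}u`. -/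
def D2 (d : ℕ) (u : EuclideanSpace ℝ (Fin d) → ℝ) (i j : Fin d)
    (x : EuclideanSpace ℝ (Fin d)) : ℝ :=
  fderiv ℝ (fun y => fderiv ℝ u y (EuclideanSpace.single j 1)) x (EuclideanSpace.single i 1)

/-- The Laplacian `Δu = ∑ᵢ D_{ii}u`. -/
def lap (d : ℕ) (u : EuclideanSpace ℝ (Fin d) → ℝ) (x : EuclideanSpace ℝ (Fin d)) : ℝ :=
  ∑ i, D2 d u i i x

/-- The pointwise norm `|Du| = (∑ᵢ |D_i u|²)^{1/2}` of the gradient. -/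
def gradNorm (d : ℕ) (u : EuclideanSpace ℝ (Fin d) → ℝ) (x : EuclideanSpace ℝ (Fin d)) : ℝ :=
  Real.sqrt (∑ i, (D1 d u i x) ^ 2)

/-- The pointwise norm `|D²u| = (∑_{i,j} |D_{ij}u|²)^{1/2}` of the Hessian. -/
def hessNorm (d : ℕ) (u : EuclideanSpace ℝ (Fin d) → ℝ) (x : EuclideanSpace ℝ (Fin d)) : ℝ :=
  Real.sqrt (∑ i, ∑ j, (D2 d u i j x) ^ 2)

/-! ### Symmetric lazy random walks and Bellman functions -/

section Walk

variable {d : ℕ}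

/-- Continuous functions with compact support, as a predicate. -/
def IsCc (f : EuclideanSpace ℝ (Fin d) → ℝ) : Prop := Continuous f ∧ HasCompactSupport f

/-- First difference in the direction `w`. -/
def dif (w : EuclideanSpace ℝ (Fin d)) (u : EuclideanSpace ℝ (Fin d) → ℝ)
    (x : EuclideanSpace ℝ (Fin d)) : ℝ := u (x + w) - u x

/-- Minus the symmetric second difference in the direction `w`. -/
def sdif (w : EuclideanSpace ℝ (Fin d)) (u : EuclideanSpace ℝ (Fin d) → ℝ)
    (x : EuclideanSpace ℝ (Fin d)) : ℝ := 2 * u x - u (x + w) - u (x - w)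

/-- Transition operator of the lazy random walk with steps `w i`: the walk stays put with
probability `1/2`, and otherwise makes a uniformly chosen step. -/
def avg {ι : Type} [Fintype ι] (w : ι → EuclideanSpace ℝ (Fin d))
    (u : EuclideanSpace ℝ (Fin d) → ℝ) (x : EuclideanSpace ℝ (Fin d)) : ℝ :=
  ∑ i, (Fintype.card ι : ℝ)⁻¹ * ((u x + u (x + w i)) / 2)

namespace IsCc

variable {f g : EuclideanSpace ℝ (Fin d) → ℝ}

/-- A continuous function of `(f, g)` vanishing at the origin is again continuous with compact
support. Only continuity of the composite is required, so `Φ` may be badly behaved off the range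
of `(f, g)`. -/
lemma of_zero (Φ : ℝ → ℝ → ℝ) (h0 : Φ 0 0 = 0) (hc : Continuous fun x => Φ (f x) (g x))
    (hf : IsCc f) (hg : IsCc g) : IsCc fun x => Φ (f x) (g x) := by
  refine ⟨hc, ?_⟩
  refine HasCompactSupport.of_support_subset_isCompact (hf.2.isCompact.union hg.2.isCompact) ?_
  intro x hx
  by_contra hcon
  simp only [Set.mem_union, not_or] at hcon
  apply hx
  simp [image_eq_zero_of_notMem_tsupport hcon.1, image_eq_zero_of_notMem_tsupport hcon.2, h0]

lemma shift (hf : IsCc f) (w : EuclideanSpace ℝ (Fin d)) : IsCc fun x => f (x + w) :=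
  ⟨hf.1.comp (by fun_prop), hf.2.comp_homeomorph (Homeomorph.addRight w)⟩

lemma add (hf : IsCc f) (hg : IsCc g) : IsCc fun x => f x + g x :=
  of_zero (· + ·) (by simp) (hf.1.add hg.1) hf hg

lemma sub (hf : IsCc f) (hg : IsCc g) : IsCc fun x => f x - g x :=
  of_zero (· - ·) (by simp) (hf.1.sub hg.1) hf hg

lemma mul (hf : IsCc f) (hg : IsCc g) : IsCc fun x => f x * g x :=
  of_zero (· * ·) (by simp) (hf.1.mul hg.1) hf hg

lemma const_mul (hf : IsCc f) (c : ℝ) : IsCc fun x => c * f x :=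
  of_zero (fun a _ => c * a) (by simp) (continuous_const.mul hf.1) hf hf

lemma abs (hf : IsCc f) : IsCc fun x => |f x| :=
  of_zero (fun a _ => |a|) (by simp) hf.1.abs hf hf

lemma zero : IsCc (fun _ : EuclideanSpace ℝ (Fin d) => (0 : ℝ)) :=
  ⟨continuous_const, HasCompactSupport.zero⟩

lemma sum {ι : Type} (s : Finset ι) {F : ι → EuclideanSpace ℝ (Fin d) → ℝ}
    (h : ∀ i ∈ s, IsCc (F i)) : IsCc fun x => ∑ i ∈ s, F i x := by
  classical
  induction s using Finset.induction_on with
  | empty => simpa using zero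
  | insert a s ha ih =>
    simp only [Finset.sum_insert ha]
    exact (h a (by simp)).add (ih fun i hi => h i (by simp [hi]))

lemma integrable (hf : IsCc f) : Integrable f := hf.1.integrable_of_hasCompactSupport hf.2

lemma dif (hf : IsCc f) (w : EuclideanSpace ℝ (Fin d)) : IsCc (dif w f) := (hf.shift w).sub hf

lemma sdif (hf : IsCc f) (w : EuclideanSpace ℝ (Fin d)) : IsCc (sdif w f) := by
  have := (((hf.const_mul 2).sub (hf.shift w)).sub (hf.shift (-w)))
  simp only [← sub_eq_add_neg] at this
  exact this

lemma avg {ι : Type} [Fintype ι] (hf : IsCc f) (w : ι → EuclideanSpace ℝ (Fin d)) :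
    IsCc (avg w f) := by
  refine IsCc.sum _ fun i _ => ?_
  have := ((hf.add (hf.shift (w i))).const_mul (1/2)).const_mul ((Fintype.card ι : ℝ)⁻¹)
  convert this using 3
  ring

lemma iter {ι : Type} [Fintype ι] (hf : IsCc f) (w : ι → EuclideanSpace ℝ (Fin d)) (n : ℕ) :
    IsCc ((_root_.avg w)^[n] f) := by
  induction n with
  | zero => exact hf
  | succ n ih => rw [Function.iterate_succ_apply']; exact ih.avg w

end IsCc

variable {f g u : EuclideanSpace ℝ (Fin d) → ℝ}

lemma integral_shift_mul (f g : EuclideanSpace ℝ (Fin d) → ℝ) (w : EuclideanSpace ℝ (Fin d)) :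
    ∫ x, f (x + w) * g x = ∫ x, f x * g (x + -w) := by
  rw [← integral_add_right_eq_self (μ := volume) (fun x => f x * g (x + -w)) w]
  simp

/-- Summation by parts. -/
lemma integral_sdif_mul (hf : IsCc f) (hg : IsCc g) (w : EuclideanSpace ℝ (Fin d)) :
    ∫ x, sdif w f x * g x = ∫ x, dif w f x * dif w g x := by
  have h0 := integral_add_right_eq_self (μ := volume) (fun x => f x * g x) w
  have h1 := integral_shift_mul g f w
  have i1 := (hf.mul hg).integrable
  have i2 := ((hf.shift w).mul hg).integrable
  have i3 := ((hf.shift (-w)).mul hg).integrable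
  have i4 := ((hf.shift w).mul (hg.shift w)).integrable
  have i5 := (hf.mul (hg.shift w)).integrable
  have e1 : ∫ x, sdif w f x * g x = 2 * (∫ x, f x * g x) - (∫ x, f (x + w) * g x)
      - ∫ x, f (x + -w) * g x := by
    rw [← integral_const_mul, ← integral_sub (i1.const_mul 2) i2,
      ← integral_sub (((hf.mul hg).const_mul 2).sub ((hf.shift w).mul hg)).integrable i3]
    refine integral_congr_ae (.of_forall fun x => ?_)
    simp only [sdif, sub_eq_add_neg]; ring
  have e2 : ∫ x, dif w f x * dif w g x = (∫ x, f (x + w) * g (x + w)) - (∫ x, f (x + w) * g x)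
      - ((∫ x, f x * g (x + w)) - ∫ x, f x * g x) := by
    rw [← integral_sub i4 i2, ← integral_sub i5 i1, ← integral_sub
        (((hf.shift w).mul (hg.shift w)).sub ((hf.shift w).mul hg)).integrable
        ((hf.mul (hg.shift w)).sub (hf.mul hg)).integrable]
    refine integral_congr_ae (.of_forall fun x => ?_)
    simp only [dif]; ring
  rw [e1, e2, h0]
  have h2 : ∫ x, f (x + -w) * g x = ∫ x, f x * g (x + w) := by
    rw [integral_shift_mul]; simp
  rw [h2]; ring

variable {ι : Type} [Fintype ι] (w : ι → EuclideanSpace ℝ (Fin d))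

lemma avg_sub (f g : EuclideanSpace ℝ (Fin d) → ℝ) :
    avg w (fun x => f x - g x) = fun x => avg w f x - avg w g x := by
  funext x
  simp only [avg, ← Finset.sum_sub_distrib]
  exact Finset.sum_congr rfl fun i _ => by ring

lemma iter_sub (f g : EuclideanSpace ℝ (Fin d) → ℝ) (n : ℕ) :
    (avg w)^[n] (fun x => f x - g x) = fun x => (avg w)^[n] f x - (avg w)^[n] g x := by
  induction n generalizing f g with
  | zero => rfl
  | succ n ih => simp only [Function.iterate_succ_apply, avg_sub, ih]

lemma avg_dif (e : EuclideanSpace ℝ (Fin d)) (f : EuclideanSpace ℝ (Fin d) → ℝ) :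
    avg w (dif e f) = dif e (avg w f) := by
  funext x
  simp only [avg, dif, ← Finset.sum_sub_distrib]
  exact Finset.sum_congr rfl fun i _ => by rw [add_right_comm]; ring

lemma avg_nonneg (hf : ∀ x, 0 ≤ f x) (x) : 0 ≤ avg w f x :=
  Finset.sum_nonneg fun i _ => mul_nonneg (by positivity) (by linarith [hf x, hf (x + w i)])

lemma integral_avg [Nonempty ι] (hf : IsCc f) : ∫ x, avg w f x = ∫ x, f x := by
  have hi : ∀ i, ∫ x, (Fintype.card ι : ℝ)⁻¹ * ((f x + f (x + w i)) / 2)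
      = (Fintype.card ι : ℝ)⁻¹ * ∫ x, f x := by
    intro i
    rw [integral_const_mul, integral_div, integral_add hf.integrable (hf.shift _).integrable,
      integral_add_right_eq_self (μ := volume) f (w i)]
    ring
  simp only [avg]
  rw [integral_finsetSum]
  · simp only [hi, Finset.sum_const, Finset.card_univ, nsmul_eq_mul]
    field_simp
  · intro i _
    exact ((hf.integrable.add (hf.shift _).integrable).div_const 2).const_mul _

/-- The walk is reversible when the family of steps is symmetric. -/
lemma integral_avg_mul (ν : ι ≃ ι) (hν : ∀ i, w (ν i) = - w i) (hf : IsCc f) (hg : IsCc g) :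
    ∫ x, avg w f x * g x = ∫ x, f x * avg w g x := by
  have h1 : ∫ x, avg w f x * g x = ∑ i, (Fintype.card ι : ℝ)⁻¹ *
      (((∫ x, f x * g x) + ∫ x, f (x + w i) * g x) / 2) := by
    have : ∀ i, (Fintype.card ι : ℝ)⁻¹ *
      (((∫ x, f x * g x) + ∫ x, f (x + w i) * g x) / 2) =
       ∫ x, (Fintype.card ι : ℝ)⁻¹ * ((f x * g x + f (x + w i) * g x) / 2) := fun i => by
      rw [integral_const_mul, integral_div,
        integral_add (hf.mul hg).integrable ((hf.shift _).mul hg).integrable]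
    simp only [this]
    rw [← integral_finsetSum]
    · refine integral_congr_ae (.of_forall fun x => ?_)
      simp only [avg, Finset.sum_mul]
      exact Finset.sum_congr rfl fun i _ => by ring
    · intro i _
      exact (((hf.mul hg).integrable.add ((hf.shift _).mul hg).integrable).div_const 2).const_mul _
  have h2 : ∫ x, f x * avg w g x = ∑ i, (Fintype.card ι : ℝ)⁻¹ *
      (((∫ x, f x * g x) + ∫ x, f x * g (x + w i)) / 2) := by
    have : ∀ i, (Fintype.card ι : ℝ)⁻¹ *
      (((∫ x, f x * g x) + ∫ x, f x * g (x + w i)) / 2) =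
       ∫ x, (Fintype.card ι : ℝ)⁻¹ * ((f x * g x + f x * g (x + w i)) / 2) := fun i => by
      rw [integral_const_mul, integral_div,
        integral_add (hf.mul hg).integrable (hf.mul (hg.shift _)).integrable]
    simp only [this]
    rw [← integral_finsetSum]
    · refine integral_congr_ae (.of_forall fun x => ?_)
      simp only [avg, Finset.mul_sum]
      exact Finset.sum_congr rfl fun i _ => by ring
    · intro i _
      exact (((hf.mul hg).integrable.add (hf.mul (hg.shift _)).integrable).div_const 2).const_mul _
  rw [h1, h2, ← Equiv.sum_comp ν]
  refine Finset.sum_congr rfl fun i _ => ?_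
  rw [integral_shift_mul, hν, neg_neg]

/-- Telescoping of `⟨Aⁿ δu, Aⁿ δg⟩` in `n`, where `A = avg w`. -/
lemma telescope (ν : ι ≃ ι) (hν : ∀ i, w (ν i) = - w i) (hf : IsCc f) (hg : IsCc g)
    (e : EuclideanSpace ℝ (Fin d)) (M : ℕ) :
    ∫ x, dif e f x * dif e g x =
      (∑ n ∈ Finset.range M, ∫ x, dif e ((avg w)^[n] (fun y => f y - avg w (avg w f) y)) x
        * dif e ((avg w)^[n] g) x)
      + ∫ x, dif e ((avg w)^[M] f) x * dif e ((avg w)^[M] g) x := by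
  induction M with
  | zero => simp
  | succ M ih =>
    rw [ih, Finset.sum_range_succ, add_assoc]
    congr 1
    have hF := hf.iter w M
    have hG := hg.iter w M
    simp only [iter_sub, Function.iterate_succ_apply']
    simp only [← Function.iterate_succ_apply, Function.iterate_succ_apply']
    set F := (avg w)^[M] f
    set G := (avg w)^[M] g
    have h1 : ∫ x, dif e (avg w F) x * dif e (avg w G) x
        = ∫ x, dif e (avg w (avg w F)) x * dif e G x := by
      rw [← avg_dif, ← avg_dif, ← integral_avg_mul w ν hν ((hF.dif e).avg w) (hG.dif e)]
      simp only [avg_dif]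
    rw [h1, ← integral_add]
    · refine integral_congr_ae (.of_forall fun x => ?_)
      simp only [dif]; ring
    · exact (((hF.sub ((hF.avg w).avg w)).dif e).mul (hG.dif e)).integrable
    · exact ((((hF.avg w).avg w).dif e).mul (hG.dif e)).integrable

/-- Convexity of `Q ± xy` gives a quantitative midpoint convexity gap for `Q`. -/
lemma gap_of_convex {S : Set (ℝ × ℝ)} {Q : ℝ × ℝ → ℝ}
    (hp : ConvexOn ℝ S fun z => Q z + z.1 * z.2) (hm : ConvexOn ℝ S fun z => Q z - z.1 * z.2)
    {a b : ℝ × ℝ} (ha : a ∈ S) (hb : b ∈ S) :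
    |b.1 - a.1| * |b.2 - a.2| / 4 ≤ (Q a + Q b) / 2 - Q ((1/2 : ℝ) • a + (1/2 : ℝ) • b) := by
  have h1 := hp.2 ha hb (by norm_num : (0:ℝ) ≤ 1/2) (by norm_num : (0:ℝ) ≤ 1/2) (by norm_num)
  have h2 := hm.2 ha hb (by norm_num : (0:ℝ) ≤ 1/2) (by norm_num : (0:ℝ) ≤ 1/2) (by norm_num)
  simp only [smul_eq_mul, Prod.fst_add, Prod.smul_fst, Prod.snd_add, Prod.smul_snd] at h1 h2
  rw [← abs_mul]
  have : |(b.1 - a.1) * (b.2 - a.2)| ≤ 4 * ((Q a + Q b) / 2 - Q ((1/2 : ℝ) • a + (1/2 : ℝ) • b)) := by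
    rw [abs_le]; constructor <;> nlinarith
  linarith

lemma convex_of_convex {S : Set (ℝ × ℝ)} {Q : ℝ × ℝ → ℝ}
    (hp : ConvexOn ℝ S fun z => Q z + z.1 * z.2) (hm : ConvexOn ℝ S fun z => Q z - z.1 * z.2) :
    ConvexOn ℝ S Q := by
  have := (hp.add hm).smul (by norm_num : (0:ℝ) ≤ 1/2)
  refine this.congr fun z _ => ?_
  simp; ring

lemma avg_mem {S : Set (ℝ × ℝ)} [Nonempty ι] (hS : Convex ℝ S) (h : ∀ x, (f x, g x) ∈ S) (x) :
    (avg w f x, avg w g x) ∈ S := by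
  have : (avg w f x, avg w g x) = ∑ i, (Fintype.card ι : ℝ)⁻¹ •
      ((1/2 : ℝ) • (f x, g x) + (1/2 : ℝ) • (f (x + w i), g (x + w i))) := by
    ext
    · simp only [avg, Prod.fst_sum]
      exact Finset.sum_congr rfl fun i _ => by simp; ring
    · simp only [avg, Prod.snd_sum]
      exact Finset.sum_congr rfl fun i _ => by simp; ring
  rw [this]
  refine hS.sum_mem (fun i _ => by positivity) (by simp) fun i _ => ?_
  exact hS (h _) (h _) (by norm_num) (by norm_num) (by norm_num)

/-- One step of the walk decreases `∫ Q(f, g)` by a quantity controlling `∫ |δf| |δg|`. -/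
lemma bellman_step [Nonempty ι] {S : Set (ℝ × ℝ)} {Q : ℝ × ℝ → ℝ}
    (hp : ConvexOn ℝ S fun z => Q z + z.1 * z.2) (hm : ConvexOn ℝ S fun z => Q z - z.1 * z.2)
    (hQc : ContinuousOn Q S) (hQ0 : Q (0, 0) = 0) (hf : IsCc f) (hg : IsCc g)
    (h : ∀ x, (f x, g x) ∈ S) (k : ι) :
    ∫ x, |dif (w k) f x| * |dif (w k) g x| ≤
      4 * Fintype.card ι * ((∫ x, Q (f x, g x)) - ∫ x, Q (avg w f x, avg w g x)) := by
  have hcc : ∀ {f g : EuclideanSpace ℝ (Fin d) → ℝ}, IsCc f → IsCc g → (∀ x, (f x, g x) ∈ S) →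
      IsCc fun x => Q (f x, g x) := fun hf hg h =>
    IsCc.of_zero (fun a b => Q (a, b)) hQ0 (hQc.comp_continuous (hf.1.prodMk hg.1) h) hf hg
  have c1 := hcc hf hg h
  have c2 := hcc (hf.avg w) (hg.avg w) (avg_mem w hp.1 h)
  have hN : (0 : ℝ) < Fintype.card ι := by exact_mod_cast Fintype.card_pos
  rw [← integral_avg w c1, ← integral_sub (c1.avg w).integrable c2.integrable,
    ← integral_const_mul]
  refine integral_mono (((hf.dif _).abs.mul (hg.dif _).abs).integrable)
    (((c1.avg w).integrable.sub c2.integrable).const_mul _) fun x => ?_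
  have hconv := convex_of_convex hp hm
  let m : ι → ℝ × ℝ := fun i => (1/2 : ℝ) • (f x, g x) + (1/2 : ℝ) • (f (x + w i), g (x + w i))
  have hmS : ∀ i, m i ∈ S := fun i =>
    hp.1 (h _) (h _) (by norm_num) (by norm_num) (by norm_num)
  have heq : (avg w f x, avg w g x) = ∑ i, (Fintype.card ι : ℝ)⁻¹ • m i := by
    ext
    · simp only [avg, Prod.fst_sum]
      exact Finset.sum_congr rfl fun i _ => by simp [m]; ring
    · simp only [avg, Prod.snd_sum]
      exact Finset.sum_congr rfl fun i _ => by simp [m]; ring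
  have hJ : Q (avg w f x, avg w g x) ≤ ∑ i, (Fintype.card ι : ℝ)⁻¹ • Q (m i) := by
    rw [heq]
    exact hconv.map_sum_le (fun i _ => by positivity) (by simp) fun i _ => hmS i
  have hgap : ∀ i, 0 ≤ (Q (f x, g x) + Q (f (x + w i), g (x + w i))) / 2 - Q (m i) := fun i =>
    le_trans (by positivity) (gap_of_convex hp hm (h x) (h (x + w i)))
  have hk := gap_of_convex hp hm (h x) (h (x + w k))
  have hsum : (Q (f x, g x) + Q (f (x + w k), g (x + w k))) / 2 - Q (m k) ≤
      ∑ i, ((Q (f x, g x) + Q (f (x + w i), g (x + w i))) / 2 - Q (m i)) :=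
    Finset.single_le_sum (f := fun i => (Q (f x, g x) + Q (f (x + w i), g (x + w i))) / 2 - Q (m i))
      (fun i _ => hgap i) (Finset.mem_univ k)
  have h3 : ∑ i, ((Q (f x, g x) + Q (f (x + w i), g (x + w i))) / 2 - Q (m i)) =
      Fintype.card ι * (avg w (fun x => Q (f x, g x)) x -
        ∑ i, (Fintype.card ι : ℝ)⁻¹ • Q (m i)) := by
    simp only [avg, ← Finset.sum_sub_distrib, Finset.mul_sum]
    refine Finset.sum_congr rfl fun i _ => ?_
    rw [smul_eq_mul]; field_simp
  have h4 : Fintype.card ι * (avg w (fun x => Q (f x, g x)) x -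
        ∑ i, (Fintype.card ι : ℝ)⁻¹ • Q (m i)) ≤ Fintype.card ι *
          (avg w (fun x => Q (f x, g x)) x - Q (avg w f x, avg w g x)) := by
    gcongr
  simp only [dif]
  simp only at hk
  have h5 := (hk.trans hsum).trans (h3.le.trans h4)
  have : |f (x + w k) - f x| * |g (x + w k) - g x| ≤ 4 * (Fintype.card ι *
          (avg w (fun x => Q (f x, g x)) x - Q (avg w f x, avg w g x))) := by linarith
  linarith

lemma iter_mem {S : Set (ℝ × ℝ)} [Nonempty ι] (hS : Convex ℝ S) (h : ∀ x, (f x, g x) ∈ S)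
    (n : ℕ) : ∀ x, ((avg w)^[n] f x, (avg w)^[n] g x) ∈ S := by
  induction n with
  | zero => exact h
  | succ n ih =>
    simp only [Function.iterate_succ_apply']
    exact avg_mem w hS ih

/-- Bilinear embedding along the walk: the losses in `bellman_step` add up to at most the initial
value of `∫ Q(f, g)`. -/
lemma bellman_sum [Nonempty ι] {S : Set (ℝ × ℝ)} {Q : ℝ × ℝ → ℝ}
    (hp : ConvexOn ℝ S fun z => Q z + z.1 * z.2) (hm : ConvexOn ℝ S fun z => Q z - z.1 * z.2)
    (hQc : ContinuousOn Q S) (hQ0 : Q (0, 0) = 0) (hQ : ∀ z ∈ S, 0 ≤ Q z)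
    (hf : IsCc f) (hg : IsCc g) (h : ∀ x, (f x, g x) ∈ S) (k : ι) (M : ℕ) :
    ∑ n ∈ Finset.range M, ∫ x, |dif (w k) ((avg w)^[n] f) x| * |dif (w k) ((avg w)^[n] g) x| ≤
      4 * Fintype.card ι * ∫ x, Q (f x, g x) := by
  have key : ∑ n ∈ Finset.range M,
      ∫ x, |dif (w k) ((avg w)^[n] f) x| * |dif (w k) ((avg w)^[n] g) x| ≤
      4 * Fintype.card ι * ((∫ x, Q (f x, g x)) -
        ∫ x, Q ((avg w)^[M] f x, (avg w)^[M] g x)) := by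
    induction M with
    | zero => simp
    | succ M ih =>
      rw [Finset.sum_range_succ]
      have := bellman_step w hp hm hQc hQ0 (hf.iter w M) (hg.iter w M) (iter_mem w hp.1 h M) k
      simp only [← Function.iterate_succ_apply' (avg w)] at this
      linarith
  refine key.trans ?_
  have : 0 ≤ ∫ x, Q ((avg w)^[M] f x, (avg w)^[M] g x) :=
    integral_nonneg fun x => hQ _ (iter_mem w hp.1 h M x)
  gcongr
  linarith

/-- The remainder in `telescope` vanishes in the limit, by `bellman_sum` with the quadratic
Bellman function `(x² + y²) / 2` and `f = g`. -/
lemma tendsto_dif_iter [Nonempty ι] (hf : IsCc f) (k : ι) :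
    Filter.Tendsto (fun n => ∫ x, (dif (w k) ((avg w)^[n] f) x) ^ 2) Filter.atTop (nhds 0) := by
  refine (summable_of_sum_range_le (c := 4 * Fintype.card ι * ∫ x, (f x ^ 2 + f x ^ 2) / 2)
    (fun n => integral_nonneg fun x => sq_nonneg _) fun M => ?_).tendsto_atTop_zero
  have hsq : ConvexOn ℝ Set.univ fun t : ℝ => t ^ 2 := Even.convexOn_pow (by decide)
  have := bellman_sum w (S := Set.univ) (Q := fun z => (z.1 ^ 2 + z.2 ^ 2) / 2) (f := f) (g := f)
    (by
      have := (hsq.comp_linearMap (LinearMap.fst ℝ ℝ ℝ + LinearMap.snd ℝ ℝ ℝ)).smul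
        (by norm_num : (0:ℝ) ≤ 1/2)
      exact this.congr fun z _ => by simp; ring)
    (by
      have := (hsq.comp_linearMap (LinearMap.fst ℝ ℝ ℝ - LinearMap.snd ℝ ℝ ℝ)).smul
        (by norm_num : (0:ℝ) ≤ 1/2)
      exact this.congr fun z _ => by simp; ring)
    (by fun_prop) (by simp) (fun z _ => by positivity) hf hf (fun x => Set.mem_univ _) k M
  simpa only [abs_mul_abs_self, ← pow_two, sq_abs] using this

end Walk

/-! ### An explicit Bellman function -/

section Bellman

/-- The Bellman function `(36/r) y^q + x^p + y^{1+2r} / (y^r + x)` on the closed quadrant, where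
`2 ≤ p < ∞` and `q = r + 1` is the conjugate exponent. The powers of `y` are written through `y^r`,
so that derivatives are rational functions of `x`, `y`, `y^r` and `x^p`. At the origin the last term
is `0 / 0 = 0`, which is its continuous extension. -/
def bel (p r : ℝ) (z : ℝ × ℝ) : ℝ :=
  36 / r * (z.2 * z.2 ^ r) + z.1 ^ p + z.2 * (z.2 ^ r) ^ 2 / (z.2 ^ r + z.1)

/-- Nonnegativity of the second derivative of `bel + σ xy` in direction `(α, β)` at a point with
`X = x`, `Y = y`, `W = y^r`, `Z = x^{p-2}`. The coefficient of `α²` is at least `Y / (4W)`: it comes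
from `x^p` if `W ≤ X` and from the rational term if `X ≤ W`. The coefficient of `β²` is at least
`36 W / Y`, and the coefficient of `2αβ` is at most `3` in modulus, so the form is nonnegative. -/
lemma bel_hess {X Y W Z α β σ p r K : ℝ} (hX : 0 < X) (hY : 0 < Y) (hW : 0 < W)
    (hr : 0 < r) (hr1 : r ≤ 1) (hp : 2 ≤ p) (hσ : |σ| ≤ 1) (hZ0 : 0 ≤ Z)
    (hZ : W ≤ X → Y / W ≤ Z) (hK : 36 ≤ K * (1 + r) * r) :
    0 ≤ K * (1 + r) * r * β ^ 2 * W / Y + p * (p - 1) * α ^ 2 * Z + 2 * σ * α * β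
      + α ^ 2 * (2 * Y * W ^ 2 / (W + X) ^ 3)
      + 2 * α * β * (-(W ^ 2 / (W + X) ^ 2) - 2 * r * X * W ^ 2 / (W + X) ^ 3)
      + β ^ 2 * (W / Y) * (r * (r + 1) * (W / (W + X) + X * W / (W + X) ^ 2)
        + 2 * r ^ 2 * X ^ 2 * W / (W + X) ^ 3) := by
  have hpp : 2 ≤ p * (p - 1) := by nlinarith
  have hm : Y / W / 4 ≤ p * (p - 1) * Z + 2 * Y * W ^ 2 / (W + X) ^ 3 := by
    rcases le_total W X with h | h
    · have h1 := hZ h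
      have h2 : 0 ≤ 2 * Y * W ^ 2 / (W + X) ^ 3 := by positivity
      have h3 : 0 < Y / W := by positivity
      nlinarith
    · have h1 : 0 ≤ p * (p - 1) * Z := by positivity
      have h2 : Y / W / 4 ≤ 2 * Y * W ^ 2 / (W + X) ^ 3 := by
        rw [div_div, div_le_div_iff₀ (by positivity) (by positivity)]
        have : (W + X) ^ 3 ≤ (2 * W) ^ 3 := by gcongr; linarith
        nlinarith
      linarith
  set c := σ - W ^ 2 / (W + X) ^ 2 - 2 * r * X * W ^ 2 / (W + X) ^ 3 with hc
  have c1 : W ^ 2 / (W + X) ^ 2 ≤ 1 := by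
    rw [div_le_one (by positivity)]; gcongr; linarith
  have c1' : 0 ≤ W ^ 2 / (W + X) ^ 2 := by positivity
  have c2 : 2 * r * X * W ^ 2 / (W + X) ^ 3 ≤ 1 := by
    rw [div_le_one (by positivity)]
    have : 2 * r * X * W ^ 2 ≤ 2 * 1 * X * W ^ 2 := by gcongr
    have h3 : 0 < W ^ 3 + W ^ 2 * X + 3 * W * X ^ 2 + X ^ 3 := by positivity
    nlinarith
  have c2' : 0 ≤ 2 * r * X * W ^ 2 / (W + X) ^ 3 := by positivity
  rw [abs_le] at hσ
  have hcu : c ≤ 3 := by linarith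
  have hcl : -3 ≤ c := by linarith
  have hlast : 0 ≤ β ^ 2 * (W / Y) * (r * (r + 1) * (W / (W + X) + X * W / (W + X) ^ 2)
        + 2 * r ^ 2 * X ^ 2 * W / (W + X) ^ 3) := by positivity
  have hα : α ^ 2 * (Y / W / 4) ≤
      α ^ 2 * (p * (p - 1) * Z + 2 * Y * W ^ 2 / (W + X) ^ 3) := by gcongr
  have hβ : 36 * (β ^ 2 * W / Y) ≤ K * (1 + r) * r * (β ^ 2 * W / Y) := by gcongr
  have hquad : 0 ≤ α ^ 2 * (Y / W / 4) + 2 * c * (α * β) + 36 * (β ^ 2 * W / Y) := by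
    have e : α ^ 2 * (Y / W / 4) + 2 * c * (α * β) + 36 * (β ^ 2 * W / Y)
      = ((α * Y) ^ 2 + 8 * c * (α * Y) * (β * W) + 144 * (β * W) ^ 2) / (4 * (Y * W)) := by
      field_simp
      ring
    rw [e]
    refine div_nonneg ?_ (by positivity)
    generalize α * Y = a, β * W = b
    rcases le_total 0 (a * b) with h | h
    · nlinarith [sq_nonneg (a - 12 * b)]
    · nlinarith [sq_nonneg (a + 12 * b)]
  have e2 : K * (1 + r) * r * β ^ 2 * W / Y = K * (1 + r) * r * (β ^ 2 * W / Y) := by ring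
  have e3 : 2 * σ * α * β
      + 2 * α * β * (-(W ^ 2 / (W + X) ^ 2) - 2 * r * X * W ^ 2 / (W + X) ^ 3) =
      2 * c * (α * β) := by rw [hc]; ring
  linarith

/-- Along segments in the open quadrant, `bel ± xy` is convex. -/
lemma bel_line {a b α β σ p r : ℝ} (hr : 0 < r) (hr1 : r ≤ 1) (hp : 2 ≤ p)
    (hpr : r * (p - 1) = 1) (hσ : |σ| ≤ 1)
    (ha : 0 < a) (hb : 0 < b) (ha' : 0 < a + α) (hb' : 0 < b + β) :
    ConvexOn ℝ (Set.Icc 0 1) fun t : ℝ =>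
      bel p r (a + t * α, b + t * β) + σ * ((a + t * α) * (b + t * β)) := by
  have hpos : ∀ t ∈ Set.Icc (0:ℝ) 1, 0 < a + t * α ∧ 0 < b + t * β := by
    rintro t ⟨h0, h1⟩
    constructor
    · rcases h0.eq_or_lt with rfl | h
      · simpa using ha
      · nlinarith
    · rcases h0.eq_or_lt with rfl | h
      · simpa using hb
      · nlinarith
  have dX : ∀ t, HasDerivAt (fun t : ℝ => a + t * α) α t := fun t => by
    simpa using ((hasDerivAt_id t).mul_const α).const_add a
  have dY : ∀ t, HasDerivAt (fun t : ℝ => b + t * β) β t := fun t => by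
    simpa using ((hasDerivAt_id t).mul_const β).const_add b
  have dW : ∀ t ∈ Set.Icc (0:ℝ) 1, HasDerivAt (fun t : ℝ => (b + t * β) ^ r)
      (r * β * (b + t * β) ^ r / (b + t * β)) t := fun t ht => by
    have := (dY t).rpow_const (p := r) (Or.inl (hpos t ht).2.ne')
    convert this using 1
    rw [Real.rpow_sub_one (hpos t ht).2.ne']; ring
  have d1 : ∀ t ∈ Set.Icc (0:ℝ) 1, HasDerivAt (fun t : ℝ =>
      bel p r (a + t * α, b + t * β) + σ * ((a + t * α) * (b + t * β)))
      (36 / r * (1 + r) * β * (b + t * β) ^ r + p * α * (a + t * α) ^ (p - 1)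
        + σ * (α * (b + t * β) + β * (a + t * α))
        + ((b + t * β) ^ r) ^ 2 * (β * ((1 + r) * (b + t * β) ^ r + (1 + 2 * r) * (a + t * α))
          - α * (b + t * β)) / ((b + t * β) ^ r + (a + t * α)) ^ 2) t := by
    intro t ht
    obtain ⟨hX, hY⟩ := hpos t ht
    have hW : 0 < (b + t * β) ^ r := Real.rpow_pos_of_pos hY r
    have := ((((dY t).mul (dW t ht)).const_mul (36 / r)).add
      ((dX t).rpow_const (p := p) (Or.inl hX.ne'))).add
      (((dY t).mul ((dW t ht).pow 2)).div ((dW t ht).add (dX t)) (add_pos hW hX).ne')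
    have := this.add (((dX t).mul (dY t)).const_mul σ)
    refine this.congr_deriv ?_
    simp only [Pi.mul_apply, Pi.add_apply, Pi.pow_apply]
    generalize (b + t * β) ^ r = W at *
    generalize (a + t * α) ^ (p - 1) = Z at *
    generalize (b + t * β) = Y at *
    generalize (a + t * α) = X at *
    field_simp
    ring
  have d2 : ∀ t ∈ Set.Icc (0:ℝ) 1, HasDerivAt (fun t : ℝ =>
      36 / r * (1 + r) * β * (b + t * β) ^ r + p * α * (a + t * α) ^ (p - 1)
        + σ * (α * (b + t * β) + β * (a + t * α))
        + ((b + t * β) ^ r) ^ 2 * (β * ((1 + r) * (b + t * β) ^ r + (1 + 2 * r) * (a + t * α))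
          - α * (b + t * β)) / ((b + t * β) ^ r + (a + t * α)) ^ 2)
      (36 / r * (1 + r) * r * β ^ 2 * (b + t * β) ^ r / (b + t * β)
      + p * (p - 1) * α ^ 2 * (a + t * α) ^ (p - 2) + 2 * σ * α * β
      + α ^ 2 * (2 * (b + t * β) * ((b + t * β) ^ r) ^ 2 / ((b + t * β) ^ r + (a + t * α)) ^ 3)
      + 2 * α * β * (-(((b + t * β) ^ r) ^ 2 / ((b + t * β) ^ r + (a + t * α)) ^ 2)
        - 2 * r * (a + t * α) * ((b + t * β) ^ r) ^ 2 / ((b + t * β) ^ r + (a + t * α)) ^ 3)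
      + β ^ 2 * ((b + t * β) ^ r / (b + t * β)) *
        (r * (r + 1) * ((b + t * β) ^ r / ((b + t * β) ^ r + (a + t * α))
          + (a + t * α) * (b + t * β) ^ r / ((b + t * β) ^ r + (a + t * α)) ^ 2)
        + 2 * r ^ 2 * (a + t * α) ^ 2 * (b + t * β) ^ r
          / ((b + t * β) ^ r + (a + t * α)) ^ 3)) t := by
    intro t ht
    obtain ⟨hX, hY⟩ := hpos t ht
    have hW : 0 < (b + t * β) ^ r := Real.rpow_pos_of_pos hY r
    have h1 := ((dW t ht).const_mul (36 / r * (1 + r) * β)).add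
      (((dX t).rpow_const (p := p - 1) (Or.inl hX.ne')).const_mul (p * α))
    have h2 := h1.add ((((dY t).const_mul α).add ((dX t).const_mul β)).const_mul σ)
    have h3 := (((dW t ht).const_mul (1 + r)).add ((dX t).const_mul (1 + 2 * r))).const_mul β
    have h4 := ((dW t ht).pow 2).mul (h3.sub ((dY t).const_mul α))
    have h5 := h2.add (h4.div (((dW t ht).add (dX t)).pow 2) (pow_pos (add_pos hW hX) 2).ne')
    refine h5.congr_deriv ?_
    simp only [Pi.mul_apply, Pi.add_apply, Pi.pow_apply, Pi.sub_apply]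
    rw [show p - 1 - 1 = p - 2 by ring]
    generalize (b + t * β) ^ r = W at *
    generalize (a + t * α) ^ (p - 2) = Z at *
    generalize (b + t * β) = Y at *
    generalize (a + t * α) = X at *
    field_simp
    ring
  refine convexOn_of_hasDerivWithinAt2_nonneg (convex_Icc 0 1)
    (fun t ht => (d1 t ht).continuousAt.continuousWithinAt)
    (fun t ht => (d1 t (interior_subset ht)).hasDerivWithinAt)
    (fun t ht => (d2 t (interior_subset ht)).hasDerivWithinAt) fun t ht => ?_
  obtain ⟨hX, hY⟩ := hpos t (interior_subset ht)
  have hW : 0 < (b + t * β) ^ r := Real.rpow_pos_of_pos hY r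
  refine bel_hess hX hY hW hr hr1 hp hσ (Real.rpow_nonneg hX.le _) (fun h => ?_) ?_
  · have h1 : ((b + t * β) ^ r) ^ (p - 2) ≤ (a + t * α) ^ (p - 2) :=
      Real.rpow_le_rpow hW.le h (by linarith)
    rw [← Real.rpow_mul hY.le, show r * (p - 2) = 1 - r by linarith, Real.rpow_sub hY,
      Real.rpow_one] at h1
    exact h1
  · field_simp
    linarith

/-- The closed quadrant. -/
def quad : Set (ℝ × ℝ) := {z | 0 ≤ z.1 ∧ 0 ≤ z.2}

lemma convex_quad : Convex ℝ quad := by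
  rintro a ⟨ha, ha'⟩ b ⟨hb, hb'⟩ s t hs ht _
  exact ⟨by simp; positivity, by simp; positivity⟩

lemma bel_nonneg {p r : ℝ} (hr : 0 < r) : ∀ z ∈ quad, 0 ≤ bel p r z := by
  rintro ⟨x, y⟩ ⟨hx, hy⟩
  simp only at hx hy
  simp only [bel]
  positivity

/-- Bound for the rational term of `bel`; it also gives its continuity at the origin. -/
lemma last_le {r x y : ℝ} (hx : 0 ≤ x) (hy : 0 ≤ y) :
    y * (y ^ r) ^ 2 / (y ^ r + x) ≤ y * y ^ r := by
  have hw : 0 ≤ y ^ r := Real.rpow_nonneg hy r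
  rcases (add_nonneg hw hx).eq_or_lt with h | h
  · rw [← h]; simp; positivity
  · rw [div_le_iff₀ h]
    nlinarith [mul_nonneg (mul_nonneg hy hw) hx]

lemma bel_le {p r : ℝ} (hr : 0 < r) {x y : ℝ} (hx : 0 ≤ x) (hy : 0 ≤ y) :
    bel p r (x, y) ≤ (36 / r + 1) * (x ^ p + y ^ (r + 1)) := by
  have h1 := last_le (r := r) hx hy
  have h2 : y ^ (r + 1) = y * y ^ r := by
    rw [Real.rpow_add_one' hy (by linarith)]; ring
  have h3 : 0 ≤ 36 / r * x ^ p := by positivity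
  simp only [bel, h2]
  nlinarith

lemma bel_zero {p r : ℝ} (hp : p ≠ 0) : bel p r (0, 0) = 0 := by
  simp [bel, hp]

lemma bel_cont {p r : ℝ} (hp : 2 ≤ p) (hr : 0 < r) : ContinuousOn (bel p r) quad := by
  have c1 : Continuous fun z : ℝ × ℝ => z.2 ^ r :=
    continuous_snd.rpow_const fun _ => Or.inr hr.le
  have c2 : Continuous fun z : ℝ × ℝ => z.1 ^ p :=
    continuous_fst.rpow_const fun _ => Or.inr (by linarith)
  refine ContinuousOn.add (by fun_prop) ?_
  rintro ⟨x, y⟩ ⟨hx, hy⟩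
  simp only at hx hy
  by_cases h : y ^ r + x = 0
  · have hw : 0 ≤ y ^ r := Real.rpow_nonneg hy r
    have hw0 : y ^ r = 0 := by linarith
    have hlim : Filter.Tendsto (fun z : ℝ × ℝ => z.2 * z.2 ^ r) (nhdsWithin (x, y) quad)
        (nhds 0) := by
      have : Continuous fun z : ℝ × ℝ => z.2 * z.2 ^ r := by fun_prop
      have h2 := this.tendsto (x, y)
      simp only [hw0, mul_zero] at h2
      exact h2.mono_left nhdsWithin_le_nhds
    unfold ContinuousWithinAt
    rw [show nhds ((fun z : ℝ × ℝ => z.2 * (z.2 ^ r) ^ 2 / (z.2 ^ r + z.1)) (x, y)) = nhds 0 by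
      simp only [h, _root_.div_zero]]
    refine tendsto_of_tendsto_of_tendsto_of_le_of_le' tendsto_const_nhds hlim ?_ ?_
    · filter_upwards [self_mem_nhdsWithin] with z hz
      have := hz.1
      have := hz.2
      positivity
    · filter_upwards [self_mem_nhdsWithin] with z hz
      exact last_le hz.1 hz.2
  · refine ContinuousAt.continuousWithinAt ?_
    have : Continuous fun z : ℝ × ℝ => z.2 * (z.2 ^ r) ^ 2 := by fun_prop
    have h3 : Continuous fun z : ℝ × ℝ => z.2 ^ r + z.1 := by fun_prop
    exact this.continuousAt.div h3.continuousAt h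

/-- On the closed quadrant, `bel + σ xy` is convex for `|σ| ≤ 1`; this follows from `bel_line` by
shifting segments into the open quadrant. -/
lemma bel_convex {σ p r : ℝ} (hr : 0 < r) (hr1 : r ≤ 1) (hp : 2 ≤ p)
    (hpr : r * (p - 1) = 1) (hσ : |σ| ≤ 1) :
    ConvexOn ℝ quad fun z => bel p r z + σ * (z.1 * z.2) := by
  refine ⟨convex_quad, ?_⟩
  rintro ⟨a, b⟩ ⟨ha, hb⟩ ⟨a', b'⟩ ⟨ha', hb'⟩ s t hs ht hst
  simp only at ha hb ha' hb'
  set F : ℝ × ℝ → ℝ := fun z => bel p r z + σ * (z.1 * z.2) with hF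
  have hFc : ContinuousOn F quad := (bel_cont hp hr).add (by fun_prop)
  -- continuity along the diagonal direction, to reduce to the open quadrant
  have hlim : ∀ x y : ℝ, 0 ≤ x → 0 ≤ y → Filter.Tendsto (fun ε : ℝ => F (x + ε, y + ε))
      (nhdsWithin 0 (Set.Ioi 0)) (nhds (F (x, y))) := by
    intro x y hx hy
    refine (hFc (x, y) ⟨hx, hy⟩).tendsto.comp (tendsto_nhdsWithin_iff.2 ⟨?_, ?_⟩)
    · have : Continuous fun ε : ℝ => (x + ε, y + ε) := by fun_prop
      have := this.tendsto 0
      simp only [add_zero] at this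
      exact this.mono_left nhdsWithin_le_nhds
    · filter_upwards [self_mem_nhdsWithin] with ε hε
      have : 0 < ε := hε
      exact ⟨by positivity, by positivity⟩
  refine le_of_tendsto_of_tendsto
    (hlim (s * a + t * a') (s * b + t * b') (by positivity) (by positivity))
    (((hlim a b ha hb).const_smul s).add ((hlim a' b' ha' hb').const_smul t)) ?_
  filter_upwards [self_mem_nhdsWithin] with ε hε
  have hε : 0 < ε := hε
  have := (bel_line (a := a + ε) (b := b + ε) (α := a' - a) (β := b' - b) hr hr1 hp hpr hσ
    (by positivity) (by positivity) (by linarith) (by linarith)).2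
    (Set.left_mem_Icc.2 zero_le_one) (Set.right_mem_Icc.2 zero_le_one) hs ht hst
  obtain rfl : s = 1 - t := by linarith
  convert this using 2 <;> simp [hF] <;> ring_nf <;> simp

end Bellman

/-! ### The discrete Calderón–Zygmund estimate -/

section DiscreteLp

variable {d : ℕ} {f g u : EuclideanSpace ℝ (Fin d) → ℝ} {ι : Type} [Fintype ι]

lemma IsCc.abs_rpow (hf : IsCc f) {p : ℝ} (hp : 0 < p) : IsCc fun x => |f x| ^ p :=
  IsCc.of_zero (fun a _ => |a| ^ p) (by simp [hp.ne'])
    (hf.1.abs.rpow_const fun _ => Or.inr hp.le) hf hf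

lemma eLpNorm_eq (hf : IsCc f) {p : ℝ} (hp : 0 < p) :
    eLpNorm f (ENNReal.ofReal p) volume = ENNReal.ofReal ((∫ x, |f x| ^ p) ^ p⁻¹) := by
  have h := (hf.1.memLp_of_hasCompactSupport (μ := volume) (p := ENNReal.ofReal p) hf.2)
  rw [h.eLpNorm_eq_integral_rpow_norm (by simpa using hp) (by simp)]
  simp [ENNReal.toReal_ofReal hp.le]

lemma eLpNorm_shift (hf : IsCc f) (p : ℝ≥0∞) (e : EuclideanSpace ℝ (Fin d)) :
    eLpNorm (fun x => f (x + e)) p volume = eLpNorm f p volume :=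
  eLpNorm_comp_measurePreserving hf.1.aestronglyMeasurable
    (measurePreserving_add_right volume e)

lemma eLpNorm_avg_le [Nonempty ι] (w : ι → EuclideanSpace ℝ (Fin d)) (hf : IsCc f)
    {p : ℝ≥0∞} (hp : 1 ≤ p) : eLpNorm (avg w f) p volume ≤ eLpNorm f p volume := by
  have h1 : avg w f = ∑ i, (Fintype.card ι : ℝ)⁻¹ • ((2⁻¹ : ℝ) • (f + fun x => f (x + w i))) := by
    funext x
    simp only [avg, Finset.sum_apply, Pi.smul_apply, Pi.add_apply, smul_eq_mul]
    exact Finset.sum_congr rfl fun i _ => by ring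
  have hm : ∀ i, AEStronglyMeasurable (fun x => f (x + w i)) volume :=
    fun i => (hf.shift (w i)).1.aestronglyMeasurable
  have hN : (Fintype.card ι : ℝ≥0∞) ≠ 0 := by simp
  rw [h1]
  refine (eLpNorm_sum_le (fun i _ => ((hf.1.aestronglyMeasurable.add (hm i)).const_smul
    _).const_smul _) hp).trans ?_
  have h2 : ∀ i, eLpNorm ((Fintype.card ι : ℝ)⁻¹ • ((2⁻¹ : ℝ) • (f + fun x => f (x + w i)))) p
      volume ≤ (Fintype.card ι : ℝ≥0∞)⁻¹ * eLpNorm f p volume := by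
    intro i
    rw [eLpNorm_const_smul, eLpNorm_const_smul]
    have h3 : ‖(Fintype.card ι : ℝ)⁻¹‖ₑ = (Fintype.card ι : ℝ≥0∞)⁻¹ := by
      rw [enorm_inv (by simp)]; simp
    have h4 : ‖(2⁻¹ : ℝ)‖ₑ = 2⁻¹ := by
      rw [enorm_inv (by simp), Real.enorm_eq_ofReal (by norm_num)]; simp
    rw [h3, h4]
    gcongr
    calc 2⁻¹ * eLpNorm (f + fun x => f (x + w i)) p volume
        ≤ 2⁻¹ * (eLpNorm f p volume + eLpNorm f p volume) := by
          gcongr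
          refine (eLpNorm_add_le hf.1.aestronglyMeasurable (hm i) hp).trans ?_
          rw [eLpNorm_shift hf]
      _ = eLpNorm f p volume := by
          rw [← two_mul, ← mul_assoc, ENNReal.inv_mul_cancel (by simp) (by simp), one_mul]
  refine (Finset.sum_le_sum fun i _ => h2 i).trans ?_
  rw [Finset.sum_const, Finset.card_univ, nsmul_eq_mul, ← mul_assoc,
    ENNReal.mul_inv_cancel hN (by simp), one_mul]

/-- `bellman_sum` for the Bellman function `bel`, which requires `2 ≤ p` and nonnegative functions. -/
lemma bilinear_two_le [Nonempty ι] {p q : ℝ} (hpq : p.HolderConjugate q) (hp : 2 ≤ p)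
    (w : ι → EuclideanSpace ℝ (Fin d)) (hf : IsCc f) (hg : IsCc g) (hf0 : ∀ x, 0 ≤ f x)
    (hg0 : ∀ x, 0 ≤ g x) (k : ι) (M : ℕ) :
    ∑ n ∈ Finset.range M, ∫ x, |dif (w k) ((avg w)^[n] f) x| * |dif (w k) ((avg w)^[n] g) x| ≤
      4 * Fintype.card ι * (36 / (q - 1) + 1) * ((∫ x, |f x| ^ p) + ∫ x, |g x| ^ q) := by
  have hq := hpq.symm.lt
  have hr : 0 < q - 1 := by linarith
  have hpr : (q - 1) * (p - 1) = 1 := by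
    have := hpq.mul_eq_add
    linarith
  have hr1 : q - 1 ≤ 1 := by nlinarith
  have hb := bellman_sum w (S := quad) (Q := bel p (q - 1)) (f := f) (g := g)
    (by
      have := bel_convex (σ := 1) hr hr1 hp hpr (by simp)
      simpa only [one_mul] using this)
    (by
      have := bel_convex (σ := -1) hr hr1 hp hpr (by simp)
      simpa only [neg_mul, one_mul, ← sub_eq_add_neg] using this)
    (bel_cont hp hr) (bel_zero (by linarith)) (bel_nonneg hr) hf hg
    (fun x => ⟨hf0 x, hg0 x⟩) k M
  refine hb.trans ?_
  rw [mul_assoc (4 * (Fintype.card ι : ℝ))]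
  gcongr
  have i1 := (hf.abs_rpow (by linarith : 0 < p)).integrable
  have i2 := (hg.abs_rpow (by linarith : 0 < q)).integrable
  rw [← integral_add i1 i2, ← integral_const_mul]
  refine integral_mono_of_nonneg (.of_forall fun x => bel_nonneg hr _ ⟨hf0 x, hg0 x⟩)
    ((i1.add i2).const_mul _) (.of_forall fun x => ?_)
  have := bel_le (p := p) hr (hf0 x) (hg0 x)
  simpa only [sub_add_cancel, abs_of_nonneg (hf0 x), abs_of_nonneg (hg0 x)] using this

/-- The case `p ≤ 2` follows from `2 ≤ p` by exchanging the two functions. -/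
lemma bilinear_nonneg (ι : Type) [Fintype ι] [Nonempty ι] {p q : ℝ} (hpq : p.HolderConjugate q) :
    ∃ C : ℝ, 0 < C ∧ ∀ (w : ι → EuclideanSpace ℝ (Fin d)) (f g : EuclideanSpace ℝ (Fin d) → ℝ),
      IsCc f → IsCc g → (∀ x, 0 ≤ f x) → (∀ x, 0 ≤ g x) → ∀ (k : ι) (M : ℕ),
    ∑ n ∈ Finset.range M, ∫ x, |dif (w k) ((avg w)^[n] f) x| * |dif (w k) ((avg w)^[n] g) x| ≤
      C * ((∫ x, |f x| ^ p) + ∫ x, |g x| ^ q) := by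
  have hN : (0:ℝ) < Fintype.card ι := by exact_mod_cast Fintype.card_pos
  rcases le_total 2 p with hp | hp
  · have hr : 0 < q - 1 := by linarith [hpq.symm.lt]
    exact ⟨4 * Fintype.card ι * (36 / (q - 1) + 1), by positivity,
      fun w f g hf hg hf0 hg0 k M => bilinear_two_le hpq hp w hf hg hf0 hg0 k M⟩
  · have hr : 0 < p - 1 := by linarith [hpq.lt]
    have hq : 2 ≤ q := by
      have := hpq.mul_eq_add
      nlinarith [hpq.symm.lt]
    refine ⟨4 * Fintype.card ι * (36 / (p - 1) + 1), by positivity,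
      fun w f g hf hg hf0 hg0 k M => ?_⟩
    have := bilinear_two_le hpq.symm hq w hg hf hg0 hf0 k M
    rw [add_comm (∫ x, |f x| ^ p)]
    simpa only [mul_comm |dif _ _ _| |dif _ _ _|] using this

/-- Signs are removed by splitting both functions into positive and negative parts. -/
lemma bilinear (ι : Type) [Fintype ι] [Nonempty ι] {p q : ℝ} (hpq : p.HolderConjugate q) :
    ∃ C : ℝ, 0 < C ∧ ∀ (w : ι → EuclideanSpace ℝ (Fin d)) (f g : EuclideanSpace ℝ (Fin d) → ℝ),
      IsCc f → IsCc g → ∀ (k : ι) (M : ℕ),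
    ∑ n ∈ Finset.range M, ∫ x, dif (w k) ((avg w)^[n] f) x * dif (w k) ((avg w)^[n] g) x ≤
      C * ((∫ x, |f x| ^ p) + ∫ x, |g x| ^ q) := by
  obtain ⟨C, hC, hb⟩ := bilinear_nonneg (d := d) ι hpq
  refine ⟨4 * C, by positivity, fun w f g hf hg k M => ?_⟩
  have hp := hpq.lt
  have hq := hpq.symm.lt
  have parts : ∀ {f : EuclideanSpace ℝ (Fin d) → ℝ} {p : ℝ}, IsCc f → 1 < p →
      ∃ f₁ f₂ : EuclideanSpace ℝ (Fin d) → ℝ, IsCc f₁ ∧ IsCc f₂ ∧ (∀ x, 0 ≤ f₁ x) ∧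
        (∀ x, 0 ≤ f₂ x) ∧ f = (fun x => f₁ x - f₂ x) ∧
        (∫ x, |f₁ x| ^ p) ≤ (∫ x, |f x| ^ p) ∧ (∫ x, |f₂ x| ^ p) ≤ (∫ x, |f x| ^ p) := by
    intro f p hf hp
    have h1 : IsCc fun x => max (f x) 0 :=
      IsCc.of_zero (fun a _ => max a 0) (by simp) (hf.1.max continuous_const) hf hf
    have h2 : IsCc fun x => max (-f x) 0 :=
      IsCc.of_zero (fun a _ => max (-a) 0) (by simp) (hf.1.neg.max continuous_const) hf hf
    refine ⟨_, _, h1, h2, fun x => le_max_right _ _, fun x => le_max_right _ _, ?_, ?_, ?_⟩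
    · funext x
      rcases le_total 0 (f x) with h | h <;> simp [h]
    · refine integral_mono (h1.abs_rpow (by linarith)).integrable
        (hf.abs_rpow (by linarith)).integrable fun x => ?_
      refine Real.rpow_le_rpow (by positivity) ?_ (by linarith)
      rw [abs_of_nonneg (le_max_right _ _)]
      exact max_le (le_abs_self _) (abs_nonneg _)
    · refine integral_mono (h2.abs_rpow (by linarith)).integrable
        (hf.abs_rpow (by linarith)).integrable fun x => ?_
      refine Real.rpow_le_rpow (by positivity) ?_ (by linarith)
      rw [abs_of_nonneg (le_max_right _ _)]
      exact max_le (neg_le_abs _) (abs_nonneg _)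
  obtain ⟨f₁, f₂, cf₁, cf₂, nf₁, nf₂, ef, if₁, if₂⟩ := parts hf hp
  obtain ⟨g₁, g₂, cg₁, cg₂, ng₁, ng₂, eg, ig₁, ig₂⟩ := parts hg hq
  set I := ∫ x, |f x| ^ p with hI
  set J := ∫ x, |g x| ^ q with hJ
  have h11 := (hb w f₁ g₁ cf₁ cg₁ nf₁ ng₁ k M).trans
    (mul_le_mul_of_nonneg_left (add_le_add if₁ ig₁) hC.le)
  have h12 := (hb w f₁ g₂ cf₁ cg₂ nf₁ ng₂ k M).trans
    (mul_le_mul_of_nonneg_left (add_le_add if₁ ig₂) hC.le)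
  have h21 := (hb w f₂ g₁ cf₂ cg₁ nf₂ ng₁ k M).trans
    (mul_le_mul_of_nonneg_left (add_le_add if₂ ig₁) hC.le)
  have h22 := (hb w f₂ g₂ cf₂ cg₂ nf₂ ng₂ k M).trans
    (mul_le_mul_of_nonneg_left (add_le_add if₂ ig₂) hC.le)
  have hsum : ∀ n ∈ Finset.range M,
      ∫ x, dif (w k) ((avg w)^[n] f) x * dif (w k) ((avg w)^[n] g) x ≤
      (∫ x, |dif (w k) ((avg w)^[n] f₁) x| * |dif (w k) ((avg w)^[n] g₁) x|) +
      (∫ x, |dif (w k) ((avg w)^[n] f₁) x| * |dif (w k) ((avg w)^[n] g₂) x|) +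
      ((∫ x, |dif (w k) ((avg w)^[n] f₂) x| * |dif (w k) ((avg w)^[n] g₁) x|) +
      (∫ x, |dif (w k) ((avg w)^[n] f₂) x| * |dif (w k) ((avg w)^[n] g₂) x|)) := by
    intro n _
    have a1 := ((cf₁.iter w n).dif (w k)).abs
    have a2 := ((cf₂.iter w n).dif (w k)).abs
    have b1 := ((cg₁.iter w n).dif (w k)).abs
    have b2 := ((cg₂.iter w n).dif (w k)).abs
    rw [← integral_add (a1.mul b1).integrable (a1.mul b2).integrable,
      ← integral_add (a2.mul b1).integrable (a2.mul b2).integrable,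
      ← integral_add ((a1.mul b1).add (a1.mul b2)).integrable
        ((a2.mul b1).add (a2.mul b2)).integrable]
    refine integral_mono (((hf.iter w n).dif _).mul ((hg.iter w n).dif _)).integrable
      (((a1.mul b1).add (a1.mul b2)).add ((a2.mul b1).add (a2.mul b2))).integrable fun x => ?_
    have e1 : dif (w k) ((avg w)^[n] f) x =
        dif (w k) ((avg w)^[n] f₁) x - dif (w k) ((avg w)^[n] f₂) x := by
      rw [ef, iter_sub]; simp only [dif]; ring
    have e2 : dif (w k) ((avg w)^[n] g) x =
        dif (w k) ((avg w)^[n] g₁) x - dif (w k) ((avg w)^[n] g₂) x := by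
      rw [eg, iter_sub]; simp only [dif]; ring
    simp only [e1, e2]
    generalize dif (w k) ((avg w)^[n] f₁) x = a
    generalize dif (w k) ((avg w)^[n] f₂) x = b
    generalize dif (w k) ((avg w)^[n] g₁) x = c
    generalize dif (w k) ((avg w)^[n] g₂) x = e
    calc (a - b) * (c - e) ≤ |a - b| * |c - e| := by rw [← abs_mul]; exact le_abs_self _
      _ ≤ (|a| + |b|) * (|c| + |e|) := by gcongr <;> exact abs_sub _ _
      _ = _ := by ring
  refine (Finset.sum_le_sum hsum).trans ?_
  simp only [Finset.sum_add_distrib]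
  linarith

/-- The telescoping identity combined with the bilinear embedding, in the limit of infinitely many
steps. -/
lemma sdif_pairing (ι : Type) [Fintype ι] [Nonempty ι] {p q : ℝ} (hpq : p.HolderConjugate q) :
    ∃ C : ℝ, 0 < C ∧ ∀ (w : ι → EuclideanSpace ℝ (Fin d)) (ν : ι ≃ ι), (∀ i, w (ν i) = -w i) →
      ∀ (u g : EuclideanSpace ℝ (Fin d) → ℝ), IsCc u → IsCc g → ∀ k : ι,
      ∫ x, sdif (w k) u x * g x ≤
        C * ((∫ x, |u x - avg w (avg w u) x| ^ p) + ∫ x, |g x| ^ q) := by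
  obtain ⟨C, hC, hb⟩ := bilinear (d := d) ι hpq
  refine ⟨C, hC, fun w ν hν u g hu hg k => ?_⟩
  have hlim := ((tendsto_dif_iter w hu k).add (tendsto_dif_iter w hg k)).const_add
    (C * ((∫ x, |u x - avg w (avg w u) x| ^ p) + ∫ x, |g x| ^ q))
  simp only [add_zero] at hlim
  refine ge_of_tendsto hlim (.of_forall fun M => ?_)
  rw [integral_sdif_mul hu hg, telescope w ν hν hu hg (w k) M]
  refine add_le_add (hb w _ g (hu.sub ((hu.avg w).avg w)) hg k M) ?_
  have cu := (hu.iter w M).dif (w k)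
  have cg := (hg.iter w M).dif (w k)
  have cu2 := cu.mul cu
  have cg2 := cg.mul cg
  simp only [pow_two]
  rw [← integral_add cu2.integrable cg2.integrable]
  refine integral_mono (cu.mul cg).integrable (cu2.add cg2).integrable fun x => ?_
  simp only
  nlinarith [sq_nonneg (dif (w k) ((avg w)^[M] u) x - dif (w k) ((avg w)^[M] g) x),
    sq_nonneg (dif (w k) ((avg w)^[M] u) x), sq_nonneg (dif (w k) ((avg w)^[M] g) x)]

/-- The discrete Calderón–Zygmund estimate; the constant depends neither on the lengths of the
steps nor on the function. -/
lemma sdif_Lp (d : ℕ) (ι : Type) [Fintype ι] [Nonempty ι] {p : ℝ} (hp : 1 < p) :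
    ∃ C : ℝ, 0 < C ∧ ∀ (w : ι → EuclideanSpace ℝ (Fin d)) (ν : ι ≃ ι), (∀ i, w (ν i) = -w i) →
      ∀ (u : EuclideanSpace ℝ (Fin d) → ℝ), IsCc u → ∀ k : ι,
      eLpNorm (sdif (w k) u) (ENNReal.ofReal p) volume ≤
        ENNReal.ofReal C * eLpNorm (fun x => u x - avg w u x) (ENNReal.ofReal p) volume := by
  have hpq := Real.HolderConjugate.conjExponent hp
  set q := p.conjExponent
  have hq := hpq.symm.lt
  obtain ⟨C, hC, hb⟩ := sdif_pairing (d := d) ι hpq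
  set τ : ℝ := (1 / (2 * C)) ^ (q - 1)⁻¹ with hτ
  have hτ0 : 0 < τ := by positivity
  have hτq : C * τ ^ q = τ / 2 := by
    have h1 : τ ^ (q - 1) = 1 / (2 * C) := by
      rw [hτ, ← Real.rpow_mul (by positivity), inv_mul_cancel₀ (by linarith), Real.rpow_one]
    have h2 : τ ^ q = τ ^ (q - 1) * τ := by
      rw [← Real.rpow_add_one hτ0.ne']; simp
    rw [h2, h1]; field_simp
  refine ⟨(2 * C / τ) ^ p⁻¹ * 2, by positivity, fun w ν hν u hu k => ?_⟩
  have hp0 : 0 < p := by linarith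
  set s := sdif (w k) u with hs
  have cs : IsCc s := hu.sdif (w k)
  -- the dual function `τ |s|^{p-2} s`
  let Φ : ℝ → ℝ := fun t => τ * ((max t 0) ^ (p - 1) - (max (-t) 0) ^ (p - 1))
  have hΦc : Continuous Φ := by
    have h1 : Continuous fun t : ℝ => (max t 0) ^ (p - 1) :=
      (continuous_id.max continuous_const).rpow_const fun _ => Or.inr (by linarith)
    have h2 : Continuous fun t : ℝ => (max (-t) 0) ^ (p - 1) :=
      (continuous_neg.max continuous_const).rpow_const fun _ => Or.inr (by linarith)
    exact continuous_const.mul (h1.sub h2)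
  have hp1 : p - 1 ≠ 0 := by linarith
  have hΦabs : ∀ t, |Φ t| = τ * |t| ^ (p - 1) := by
    intro t
    simp only [Φ, abs_mul, abs_of_pos hτ0]
    congr 1
    rcases le_total 0 t with h | h
    · rw [max_eq_left h, max_eq_right (by linarith), Real.zero_rpow hp1, sub_zero,
        abs_of_nonneg (Real.rpow_nonneg h _), abs_of_nonneg h]
    · rw [max_eq_right h, max_eq_left (by linarith), Real.zero_rpow hp1, zero_sub, abs_neg,
        abs_of_nonneg (Real.rpow_nonneg (by linarith) _), abs_of_nonpos h]
  have hmulp : ∀ t : ℝ, |t| ^ (p - 1) * |t| = |t| ^ p := fun t => by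
    have := Real.rpow_add_one' (abs_nonneg t) (y := p - 1) (by linarith)
    rw [← this, sub_add_cancel]
  have hΦmul : ∀ t, t * Φ t = τ * |t| ^ p := by
    intro t
    rw [← hmulp]
    simp only [Φ]
    rcases le_total 0 t with h | h
    · rw [max_eq_left h, max_eq_right (by linarith : -t ≤ 0), Real.zero_rpow hp1, sub_zero,
        abs_of_nonneg h]
      ring
    · rw [max_eq_right h, max_eq_left (by linarith : 0 ≤ -t), Real.zero_rpow hp1, zero_sub,
        abs_of_nonpos h]
      ring
  have hΦq : ∀ t, |Φ t| ^ q = τ ^ q * |t| ^ p := by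
    intro t
    rw [hΦabs, Real.mul_rpow hτ0.le (by positivity), ← Real.rpow_mul (abs_nonneg t),
      hpq.sub_one_mul_conj]
  have cΦ : IsCc fun x => Φ (s x) :=
    IsCc.of_zero (fun a _ => Φ a) (by simp [Φ]) (hΦc.comp cs.1) cs cs
  have key := hb w ν hν u _ hu cΦ k
  simp only [← hs, hΦmul, hΦq, integral_const_mul] at key
  have cF := hu.sub ((hu.avg w).avg w)
  have hJ : (∫ x, |s x| ^ p) ≤ 2 * C / τ * ∫ x, |u x - avg w (avg w u) x| ^ p := by
    rw [mul_add, ← mul_assoc C, hτq] at key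
    rw [div_mul_eq_mul_div, le_div_iff₀ hτ0]
    linarith
  have h1 : eLpNorm s (ENNReal.ofReal p) volume ≤ ENNReal.ofReal ((2 * C / τ) ^ p⁻¹) *
      eLpNorm (fun x => u x - avg w (avg w u) x) (ENNReal.ofReal p) volume := by
    rw [eLpNorm_eq cs hp0, eLpNorm_eq cF hp0, ← ENNReal.ofReal_mul (by positivity),
      ← Real.mul_rpow (by positivity) (integral_nonneg fun x => by positivity)]
    refine ENNReal.ofReal_le_ofReal (Real.rpow_le_rpow (integral_nonneg fun x => by positivity)
      hJ (by positivity))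
  refine h1.trans ?_
  rw [ENNReal.ofReal_mul (by positivity), mul_assoc]
  gcongr
  have cG := hu.sub (hu.avg w)
  have h1p : 1 ≤ ENNReal.ofReal p := by simpa using hp.le
  have e : (fun x => u x - avg w (avg w u) x) =
      (fun x => u x - avg w u x) + avg w (fun x => u x - avg w u x) := by
    rw [avg_sub]; funext x; simp
  rw [e]
  refine (eLpNorm_add_le cG.1.aestronglyMeasurable (cG.avg w).1.aestronglyMeasurable h1p).trans ?_
  rw [show ENNReal.ofReal 2 = 2 by simp, two_mul]
  gcongr
  exact eLpNorm_avg_le w cG h1p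

end DiscreteLp

/-! ### Difference quotients and convergence of norms -/

section Continuum

variable {d : ℕ} {u : EuclideanSpace ℝ (Fin d) → ℝ}

/-- Second derivative of `u` as a bilinear form. -/
abbrev hess (u : EuclideanSpace ℝ (Fin d) → ℝ) (x : EuclideanSpace ℝ (Fin d)) :
    EuclideanSpace ℝ (Fin d) →L[ℝ] EuclideanSpace ℝ (Fin d) →L[ℝ] ℝ := fderiv ℝ (fderiv ℝ u) x

lemma contDiff_fderiv_one (hu : ContDiff ℝ (⊤ : ℕ∞) u) : ContDiff ℝ 1 (fderiv ℝ u) :=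
  hu.fderiv_right (by norm_cast)

lemma hess_continuous (hu : ContDiff ℝ (⊤ : ℕ∞) u) : Continuous (hess u) :=
  (contDiff_fderiv_one hu).continuous_fderiv (by norm_num)

lemma fderiv_hasFDerivAt (hu : ContDiff ℝ (⊤ : ℕ∞) u) (x) :
    HasFDerivAt (fderiv ℝ u) (hess u x) x :=
  ((contDiff_fderiv_one hu).differentiable (by norm_num) x).hasFDerivAt

lemma D2_eq (hu : ContDiff ℝ (⊤ : ℕ∞) u) (i j : Fin d) (x) :
    D2 d u i j x = hess u x (EuclideanSpace.single i 1) (EuclideanSpace.single j 1) := by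
  have := (fderiv_hasFDerivAt hu x).clm_apply
    (hasFDerivAt_const (EuclideanSpace.single j (1 : ℝ)) x)
  simp [D2, this.fderiv]

lemma hess_symm (hu : ContDiff ℝ (⊤ : ℕ∞) u) (x a b) : hess u x a b = hess u x b a :=
  (hu.contDiffAt.isSymmSndFDerivAt (by
    rw [minSmoothness_of_isRCLikeNormedField]
    exact WithTop.coe_le_coe.2 le_top)) a b

/-- `F n → G` pointwise, boundedly, and within a common compact set; this is a convenient
sufficient condition for convergence of `L_p` norms. -/
def BddTendsto (F : ℕ → EuclideanSpace ℝ (Fin d) → ℝ) (G : EuclideanSpace ℝ (Fin d) → ℝ) : Prop :=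
  (∀ n, Continuous (F n)) ∧ Continuous G ∧ (∃ B, ∀ n x, |F n x| ≤ B) ∧
    (∃ R, ∀ n x, R < ‖x‖ → F n x = 0) ∧
    ∀ x, Filter.Tendsto (fun n => F n x) Filter.atTop (nhds (G x))

namespace BddTendsto

variable {F F' : ℕ → EuclideanSpace ℝ (Fin d) → ℝ} {G G' : EuclideanSpace ℝ (Fin d) → ℝ}

lemma add (h : BddTendsto F G) (h' : BddTendsto F' G') :
    BddTendsto (fun n x => F n x + F' n x) (fun x => G x + G' x) := by
  obtain ⟨a, b, ⟨B, hB⟩, ⟨R, hR⟩, c⟩ := h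
  obtain ⟨a', b', ⟨B', hB'⟩, ⟨R', hR'⟩, c'⟩ := h'
  refine ⟨fun n => (a n).add (a' n), b.add b', ⟨B + B', fun n x => ?_⟩,
    ⟨max R R', fun n x hx => ?_⟩, fun x => (c x).add (c' x)⟩
  · exact (abs_add_le _ _).trans (add_le_add (hB n x) (hB' n x))
  · show F n x + F' n x = 0
    rw [hR n x ((le_max_left _ _).trans_lt hx), hR' n x ((le_max_right _ _).trans_lt hx), add_zero]

lemma const_mul (h : BddTendsto F G) (k : ℝ) :
    BddTendsto (fun n x => k * F n x) (fun x => k * G x) := by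
  obtain ⟨a, b, ⟨B, hB⟩, ⟨R, hR⟩, c⟩ := h
  refine ⟨fun n => continuous_const.mul (a n), continuous_const.mul b,
    ⟨|k| * B, fun n x => ?_⟩, ⟨R, fun n x hx => by
      show k * F n x = 0
      rw [hR n x hx, mul_zero]⟩,
    fun x => (c x).const_mul k⟩
  rw [abs_mul]
  exact mul_le_mul_of_nonneg_left (hB n x) (abs_nonneg k)

lemma zero : BddTendsto (fun _ _ => 0) (fun _ : EuclideanSpace ℝ (Fin d) => (0 : ℝ)) :=
  ⟨fun _ => continuous_const, continuous_const, ⟨0, by simp⟩, ⟨0, by simp⟩,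
    fun _ => tendsto_const_nhds⟩

lemma sum {ι : Type} (s : Finset ι) {F : ι → ℕ → EuclideanSpace ℝ (Fin d) → ℝ}
    {G : ι → EuclideanSpace ℝ (Fin d) → ℝ} (h : ∀ i, BddTendsto (F i) (G i)) :
    BddTendsto (fun n x => ∑ i ∈ s, F i n x) (fun x => ∑ i ∈ s, G i x) := by
  classical
  induction s using Finset.induction_on with
  | empty => simpa using zero
  | insert a s ha ih =>
    simp only [Finset.sum_insert ha]
    exact (h a).add ih

lemma of_isCc {f : EuclideanSpace ℝ (Fin d) → ℝ} (hf : IsCc f) : BddTendsto (fun _ => f) f := by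
  obtain ⟨B, hB⟩ := hf.1.bounded_above_of_compact_support hf.2
  obtain ⟨R, hR⟩ := hf.2.isCompact.isBounded.exists_norm_le
  refine ⟨fun _ => hf.1, hf.1, ⟨B, fun _ x => hB x⟩, ⟨R, fun _ x hx => ?_⟩,
    fun _ => tendsto_const_nhds⟩
  exact image_eq_zero_of_notMem_tsupport fun h => (hR x h).not_gt hx

lemma tendsto_eLpNorm (h : BddTendsto F G) {p : ℝ} (hp : 0 < p) :
    Filter.Tendsto (fun n => eLpNorm (F n) (ENNReal.ofReal p) volume) Filter.atTop
      (nhds (eLpNorm G (ENNReal.ofReal p) volume)) := by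
  obtain ⟨a, b, ⟨B, hB⟩, ⟨R, hR⟩, c⟩ := h
  have cc : ∀ f : EuclideanSpace ℝ (Fin d) → ℝ, Continuous f → (∀ x, R < ‖x‖ → f x = 0) →
      IsCc f := fun f hf h0 => by
    refine ⟨hf, HasCompactSupport.of_support_subset_isCompact
      (isCompact_closedBall (0 : EuclideanSpace ℝ (Fin d)) R) fun x hx => ?_⟩
    by_contra hcon
    exact hx (h0 x (by simpa using hcon))
  have cF : ∀ n, IsCc (F n) := fun n => cc _ (a n) (hR n)
  have cG : IsCc G := cc _ b fun x hx => by
    refine tendsto_nhds_unique (c x) ?_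
    simp only [hR _ x hx]
    exact tendsto_const_nhds
  simp only [eLpNorm_eq (cF _) hp, eLpNorm_eq cG hp]
  refine ENNReal.tendsto_ofReal (Filter.Tendsto.rpow_const ?_ (Or.inr (by positivity)))
  refine tendsto_integral_of_dominated_convergence
    ((Metric.closedBall (0 : EuclideanSpace ℝ (Fin d)) R).indicator fun _ => B ^ p)
    (fun n => ((cF n).abs_rpow hp).1.aestronglyMeasurable) ?_ (fun n => .of_forall fun x => ?_)
    (.of_forall fun x => ((c x).abs.rpow_const (Or.inr hp.le)))
  · rw [integrable_indicator_iff measurableSet_closedBall]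
    exact integrableOn_const (by
      exact (isCompact_closedBall (0 : EuclideanSpace ℝ (Fin d)) R).measure_lt_top.ne)
  · by_cases hx : x ∈ Metric.closedBall (0 : EuclideanSpace ℝ (Fin d)) R
    · rw [Set.indicator_of_mem hx, Real.norm_of_nonneg (by positivity)]
      exact Real.rpow_le_rpow (abs_nonneg _) (hB n x) hp.le
    · rw [Set.indicator_of_notMem hx, hR n x (by simpa using hx)]
      simp [hp.ne']

end BddTendsto

lemma line_hasDerivAt (hu : ContDiff ℝ (⊤ : ℕ∞) u) (x v : EuclideanSpace ℝ (Fin d)) (t : ℝ) :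
    HasDerivAt (fun t : ℝ => u (x + t • v)) (fderiv ℝ u (x + t • v) v) t := by
  have h1 : HasDerivAt (fun t : ℝ => x + t • v) v t := by
    simpa using ((hasDerivAt_id t).smul_const v).const_add x
  exact ((hu.differentiable (by simp) (x + t • v)).hasFDerivAt).comp_hasDerivAt t h1

lemma line_hasDerivAt2 (hu : ContDiff ℝ (⊤ : ℕ∞) u) (x v : EuclideanSpace ℝ (Fin d)) (t : ℝ) :
    HasDerivAt (fun t : ℝ => fderiv ℝ u (x + t • v) v) (hess u (x + t • v) v v) t := by
  have h1 : HasDerivAt (fun t : ℝ => x + t • v) v t := by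
    simpa using ((hasDerivAt_id t).smul_const v).const_add x
  have := ((fderiv_hasFDerivAt hu (x + t • v)).clm_apply
    (hasFDerivAt_const v (x + t • v))).comp_hasDerivAt t h1
  exact this.congr_deriv (by simp)

/-- Quantitative second-order Taylor formula for symmetric differences. -/
lemma second_diff (hu : ContDiff ℝ (⊤ : ℕ∞) u) (x v : EuclideanSpace ℝ (Fin d)) {h L ε : ℝ}
    (hh : 0 ≤ h) (hb : ∀ t ∈ Set.Icc (-h) h, |hess u (x + t • v) v v - L| ≤ ε) :
    |sdif (h • v) u x + h ^ 2 * L| ≤ 2 * ε * h ^ 2 := by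
  have hε : 0 ≤ ε := (abs_nonneg _).trans (hb 0 ⟨by linarith, hh⟩)
  have step : ∀ t ∈ Set.Icc 0 h,
      |fderiv ℝ u (x + t • v) v - fderiv ℝ u (x + (-t) • v) v - 2 * t * L| ≤ 2 * ε * h := by
    intro t ht
    have := (convex_Icc (-h) h).norm_image_sub_le_of_norm_hasDerivWithin_le
      (f := fun s => fderiv ℝ u (x + s • v) v - s * L)
      (f' := fun s => hess u (x + s • v) v v - L) (C := ε) (x := -t) (y := t)
      (fun s _ => by
        have := (line_hasDerivAt2 hu x v s).sub ((hasDerivAt_id s).mul_const L)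
        simp only [one_mul] at this
        exact this.hasDerivWithinAt)
      (fun s hs => hb s hs) ⟨by linarith [ht.2], by linarith [ht.1]⟩
      ⟨by linarith [ht.1], ht.2⟩
    rw [Real.norm_eq_abs, Real.norm_eq_abs, sub_neg_eq_add,
      abs_of_nonneg (show (0 : ℝ) ≤ t + t by linarith [ht.1])]
      at this
    calc _ = |fderiv ℝ u (x + t • v) v - t * L - (fderiv ℝ u (x + (-t) • v) v - -t * L)| := by
          congr 1; ring
      _ ≤ ε * (t + t) := this
      _ ≤ 2 * ε * h := by nlinarith [ht.2]
  have := (convex_Icc 0 h).norm_image_sub_le_of_norm_hasDerivWithin_le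
    (f := fun s => u (x + s • v) + u (x + (-s) • v) - s ^ 2 * L)
    (f' := fun s => fderiv ℝ u (x + s • v) v - fderiv ℝ u (x + (-s) • v) v - 2 * s * L)
    (C := 2 * ε * h) (x := 0) (y := h)
    (fun s _ => by
      have h1 := line_hasDerivAt hu x v s
      have h2 := (line_hasDerivAt hu x v (-s)).scomp s (hasDerivAt_neg s)
      have h3 := (h1.add h2).sub ((hasDerivAt_pow 2 s).mul_const L)
      refine HasDerivAt.hasDerivWithinAt (h3.congr_deriv ?_)
      simp; ring)
    step ⟨le_refl _, hh⟩ ⟨hh, le_refl _⟩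
  simp only [Real.norm_eq_abs, sub_zero, abs_of_nonneg hh] at this
  calc _ = |u (x + h • v) + u (x + -h • v) - h ^ 2 * L -
        (u (x + (0:ℝ) • v) + u (x + -(0:ℝ) • v) - 0 ^ 2 * L)| := by
        rw [← abs_neg]
        simp only [sdif, neg_smul, zero_smul, neg_zero, add_zero, sub_eq_add_neg]
        congr 1; ring
    _ ≤ _ := this
    _ = _ := by ring

/-- The step size `1 / (n + 1)`. -/
abbrev hn (n : ℕ) : ℝ := 1 / ((n : ℝ) + 1)

lemma hn_pos (n : ℕ) : 0 < hn n := Nat.one_div_pos_of_nat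

lemma hn_le (n : ℕ) : hn n ≤ 1 := by
  rw [hn, div_le_one (by positivity)]; simp

lemma norm_le_of_hn {x v : EuclideanSpace ℝ (Fin d)} {R : ℝ} (n : ℕ) (hx : R + ‖v‖ < ‖x‖) :
    R < ‖x + hn n • v‖ := by
  have h1 : ‖hn n • v‖ ≤ ‖v‖ := by
    rw [norm_smul, Real.norm_of_nonneg (hn_pos n).le]
    exact mul_le_of_le_one_left (norm_nonneg v) (hn_le n)
  have h2 := norm_sub_le (x + hn n • v) (hn n • v)
  rw [add_sub_cancel_right] at h2
  linarith

lemma hess_apply_continuous (hu : ContDiff ℝ (⊤ : ℕ∞) u) (v : EuclideanSpace ℝ (Fin d)) :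
    Continuous fun x => hess u x v v :=
  ((hess_continuous hu).clm_apply continuous_const).clm_apply continuous_const

lemma hess_apply_bounded (hu : ContDiff ℝ (⊤ : ℕ∞) u) (hc : HasCompactSupport u)
    (v : EuclideanSpace ℝ (Fin d)) : ∃ B, ∀ x, |hess u x v v| ≤ B := by
  have hs : HasCompactSupport fun x => hess u x v v :=
    ((hc.fderiv ℝ).fderiv ℝ).comp_left
      (g := fun A : EuclideanSpace ℝ (Fin d) →L[ℝ] EuclideanSpace ℝ (Fin d) →L[ℝ] ℝ => A v v)
      (by simp)
  exact (hess_apply_continuous hu v).bounded_above_of_compact_support hs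

/-- Rescaled second differences converge to (minus) the second directional derivative. -/
lemma tendsto_sdif (hu : ContDiff ℝ (⊤ : ℕ∞) u) (hc : HasCompactSupport u)
    (v : EuclideanSpace ℝ (Fin d)) :
    BddTendsto (fun n x => ((n : ℝ) + 1) ^ 2 * sdif (hn n • v) u x) (fun x => -hess u x v v) := by
  have hcc : IsCc u := ⟨hu.continuous, hc⟩
  have hHc := hess_apply_continuous hu v
  obtain ⟨B, hBv⟩ := hess_apply_bounded hu hc v
  obtain ⟨R, hR⟩ := hc.isCompact.isBounded.exists_norm_le
  have hz : ∀ x, R < ‖x‖ → u x = 0 := fun x hx =>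
    image_eq_zero_of_notMem_tsupport fun h => (hR x h).not_gt hx
  have hsq : ∀ n : ℕ, ((n : ℝ) + 1) ^ 2 * hn n ^ 2 = 1 := fun n => by
    rw [hn]; field_simp
  refine ⟨fun n => (((hcc.sdif _).const_mul _).1), hHc.neg, ⟨2 * B, fun n x => ?_⟩,
    ⟨R + ‖v‖, fun n x hx => ?_⟩, fun x => ?_⟩
  · have := second_diff hu x v (L := 0) (hn_pos n).le fun t _ => by
      rw [sub_zero]; exact hBv (x + t • v)
    rw [mul_zero, add_zero] at this
    rw [abs_mul, abs_of_nonneg (by positivity)]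
    calc _ ≤ ((n : ℝ) + 1) ^ 2 * (2 * B * hn n ^ 2) := by gcongr
      _ = (((n : ℝ) + 1) ^ 2 * hn n ^ 2) * (2 * B) := by ring
      _ = _ := by rw [hsq, one_mul]
  · have h1 := hz _ (norm_le_of_hn (v := v) n hx)
    have h2 := hz _ (norm_le_of_hn (v := -v) n (by simpa using hx))
    have h3 := hz x (by linarith [norm_nonneg v])
    rw [smul_neg, ← sub_eq_add_neg] at h2
    show ((n : ℝ) + 1) ^ 2 * sdif (hn n • v) u x = 0
    simp only [sdif, h1, h2, h3, sub_self, mul_zero]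
  · rw [Metric.tendsto_atTop]
    intro ε hε
    have hline : Continuous fun t : ℝ => hess u (x + t • v) v v :=
      hHc.comp (by fun_prop)
    obtain ⟨δ, hδ, hδ'⟩ := Metric.continuous_iff.1 hline 0 (ε / 4) (by positivity)
    obtain ⟨n₀, hn₀⟩ := exists_nat_one_div_lt hδ
    refine ⟨n₀, fun n hnn => ?_⟩
    have hlt : hn n < δ := (Nat.one_div_le_one_div hnn).trans_lt hn₀
    have := second_diff hu x v (L := hess u x v v) (ε := ε / 4) (hn_pos n).le fun t ht => by
      have h1 := hδ' t (by
        rw [Real.dist_eq, sub_zero, abs_lt]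
        constructor <;> linarith [ht.1, ht.2])
      rw [Real.dist_eq, zero_smul, add_zero] at h1
      exact h1.le
    rw [Real.dist_eq]
    calc |((n : ℝ) + 1) ^ 2 * sdif (hn n • v) u x - -hess u x v v|
        = |((n : ℝ) + 1) ^ 2 * (sdif (hn n • v) u x + hn n ^ 2 * hess u x v v)| := by
          congr 1
          rw [mul_add, ← mul_assoc, hsq]; ring
      _ = ((n : ℝ) + 1) ^ 2 * |sdif (hn n • v) u x + hn n ^ 2 * hess u x v v| := by
          rw [abs_mul, abs_of_nonneg (by positivity)]
      _ ≤ ((n : ℝ) + 1) ^ 2 * (2 * (ε / 4) * hn n ^ 2) := by gcongr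
      _ = (((n : ℝ) + 1) ^ 2 * hn n ^ 2) * (ε / 2) := by ring
      _ < ε := by rw [hsq]; linarith

/-- Rescaled first differences converge to the directional derivative. -/
lemma tendsto_dif (hu : ContDiff ℝ (⊤ : ℕ∞) u) (hc : HasCompactSupport u)
    (v : EuclideanSpace ℝ (Fin d)) :
    BddTendsto (fun n x => ((n : ℝ) + 1) * dif (hn n • v) u x) (fun x => fderiv ℝ u x v) := by
  have hcc : IsCc u := ⟨hu.continuous, hc⟩
  have hDc : Continuous (fderiv ℝ u) := hu.continuous_fderiv (by simp)
  obtain ⟨B, hB⟩ := hDc.bounded_above_of_compact_support (hc.fderiv ℝ)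
  obtain ⟨R, hR⟩ := hc.isCompact.isBounded.exists_norm_le
  have hz : ∀ x, R < ‖x‖ → u x = 0 := fun x hx =>
    image_eq_zero_of_notMem_tsupport fun h => (hR x h).not_gt hx
  refine ⟨fun n => (((hcc.dif _).const_mul _).1), by fun_prop, ⟨B * ‖v‖, fun n x => ?_⟩,
    ⟨R + ‖v‖, fun n x hx => ?_⟩, fun x => ?_⟩
  · have := convex_univ.norm_image_sub_le_of_norm_fderiv_le (𝕜 := ℝ) (f := u) (C := B) (x := x)
      (y := x + hn n • v) (fun y _ => hu.differentiable (by simp) y) (fun y _ => hB y)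
      (Set.mem_univ _) (Set.mem_univ _)
    rw [add_sub_cancel_left, norm_smul, Real.norm_of_nonneg (hn_pos n).le, Real.norm_eq_abs] at this
    rw [abs_mul, abs_of_nonneg (by positivity)]
    calc _ ≤ ((n : ℝ) + 1) * (B * (hn n * ‖v‖)) := by
          exact mul_le_mul_of_nonneg_left this (by positivity)
      _ = _ := by rw [hn]; field_simp
  · have h1 := hz _ (norm_le_of_hn (v := v) n hx)
    have h3 := hz x (by linarith [norm_nonneg v])
    show ((n : ℝ) + 1) * dif (hn n • v) u x = 0
    simp only [dif, h1, h3, sub_self, mul_zero]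
  · have h1 := line_hasDerivAt hu x v 0
    rw [hasDerivAt_iff_tendsto_slope] at h1
    simp only [zero_smul, add_zero] at h1
    have h2 : Filter.Tendsto hn Filter.atTop (nhdsWithin 0 {0}ᶜ) :=
      tendsto_nhdsWithin_iff.2 ⟨tendsto_one_div_add_atTop_nhds_zero_nat,
        .of_forall fun n => (hn_pos n).ne'⟩
    refine (h1.comp h2).congr fun n => ?_
    simp [slope_def_field, dif, hn]
    ring

end Continuum

/-! ### Estimates for the Laplacian -/

section Resolvent

variable {d : ℕ} {u : EuclideanSpace ℝ (Fin d) → ℝ}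

/-- For symmetric steps, `1 - A` is an average of second differences. -/
lemma sub_avg_eq {ι : Type} [Fintype ι] [Nonempty ι] (w : ι → EuclideanSpace ℝ (Fin d))
    (ν : ι ≃ ι) (hν : ∀ i, w (ν i) = -w i) (u : EuclideanSpace ℝ (Fin d) → ℝ)
    (x : EuclideanSpace ℝ (Fin d)) :
    u x - avg w u x = (4 * (Fintype.card ι : ℝ))⁻¹ * ∑ i, sdif (w i) u x := by
  have hN : (Fintype.card ι : ℝ) ≠ 0 := Nat.cast_ne_zero.2 Fintype.card_ne_zero
  have h1 : ∑ i, u (x - w i) = ∑ i, u (x + w i) := by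
    rw [← Equiv.sum_comp ν fun i => u (x + w i)]
    simp only [hν, sub_eq_add_neg]
  simp only [avg, sdif, ← Finset.mul_sum, ← Finset.sum_div, Finset.sum_sub_distrib,
    Finset.sum_add_distrib, h1, Finset.sum_const, Finset.card_univ, nsmul_eq_mul]
  field_simp
  ring

lemma tendsto_sub_avg (hu : ContDiff ℝ (⊤ : ℕ∞) u) (hc : HasCompactSupport u) {ι : Type}
    [Fintype ι] [Nonempty ι] (w : ι → EuclideanSpace ℝ (Fin d))
    (ν : ι ≃ ι) (hν : ∀ i, w (ν i) = -w i) :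
    BddTendsto (fun n x => ((n : ℝ) + 1) ^ 2 * (u x - avg (fun i => hn n • w i) u x))
      (fun x => (4 * (Fintype.card ι : ℝ))⁻¹ * ∑ i, -hess u x (w i) (w i)) := by
  have h := (BddTendsto.sum Finset.univ fun i => tendsto_sdif hu hc (w i)).const_mul
    (4 * (Fintype.card ι : ℝ))⁻¹
  have e : (fun (n : ℕ) x => ((n : ℝ) + 1) ^ 2 * (u x - avg (fun i => hn n • w i) u x)) =
      fun (n : ℕ) x => (4 * (Fintype.card ι : ℝ))⁻¹ *
        ∑ i, ((n : ℝ) + 1) ^ 2 * sdif (hn n • w i) u x := by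
    funext n x
    rw [sub_avg_eq (fun i => hn n • w i) ν (fun i => by rw [hν, smul_neg]), ← Finset.mul_sum]
    ring
  rw [e]
  exact h

lemma eLpNorm_mul {f : EuclideanSpace ℝ (Fin d) → ℝ} {c : ℝ} (hc : 0 ≤ c) (p : ℝ≥0∞) :
    eLpNorm (fun x => c * f x) p volume = ENNReal.ofReal c * eLpNorm f p volume := by
  have := eLpNorm_const_smul c f p volume
  rw [Real.enorm_of_nonneg hc] at this
  exact this

/-- The Calderón–Zygmund estimate for a general symmetric system of directions, obtained by
shrinking the steps of the random walk to zero. -/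
lemma hess_Lp (d : ℕ) (ι : Type) [Fintype ι] [Nonempty ι] {p : ℝ} (hp : 1 < p) :
    ∃ C : ℝ, 0 < C ∧ ∀ (w : ι → EuclideanSpace ℝ (Fin d)) (ν : ι ≃ ι), (∀ i, w (ν i) = -w i) →
      ∀ (u : EuclideanSpace ℝ (Fin d) → ℝ), ContDiff ℝ (⊤ : ℕ∞) u → HasCompactSupport u → ∀ k : ι,
      eLpNorm (fun x => -hess u x (w k) (w k)) (ENNReal.ofReal p) volume ≤
        ENNReal.ofReal C * eLpNorm (fun x => (4 * (Fintype.card ι : ℝ))⁻¹ *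
          ∑ i, -hess u x (w i) (w i)) (ENNReal.ofReal p) volume := by
  obtain ⟨C, hC, h⟩ := sdif_Lp d ι hp
  refine ⟨C, hC, fun w ν hν u hu hc k => ?_⟩
  have hp0 : 0 < p := by linarith
  refine le_of_tendsto_of_tendsto' ((tendsto_sdif hu hc (w k)).tendsto_eLpNorm hp0)
    (ENNReal.Tendsto.const_mul ((tendsto_sub_avg hu hc w ν hν).tendsto_eLpNorm hp0)
      (Or.inr ENNReal.ofReal_ne_top)) fun n => ?_
  rw [eLpNorm_mul (by positivity), eLpNorm_mul (by positivity), mul_left_comm]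
  gcongr
  exact h (fun i => hn n • w i) ν (fun i => by rw [hν, smul_neg]) u ⟨hu.continuous, hc⟩ k

/-- Index set of the steps `±e_i ± e_j`. -/
abbrev Idx (d : ℕ) : Type := Fin d × Fin d × Bool × Bool

/-- The sign attached to a Boolean. -/
def sgn (b : Bool) : ℝ := if b then 1 else -1

/-- The steps `±e_i ± e_j`. The case `i = j` yields `±2 e_i` and `0`. -/
def stp (d : ℕ) (k : Idx d) : EuclideanSpace ℝ (Fin d) :=
  sgn k.2.2.1 • EuclideanSpace.single k.1 1 + sgn k.2.2.2 • EuclideanSpace.single k.2.1 1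

/-- The involution of the index set reversing both signs. -/
def flp (d : ℕ) : Idx d ≃ Idx d :=
  (Equiv.refl _).prodCongr ((Equiv.refl _).prodCongr (Equiv.boolNot.prodCongr Equiv.boolNot))

lemma stp_flp (d : ℕ) (k : Idx d) : stp d (flp d k) = -stp d k := by
  obtain ⟨i, j, a, b⟩ := k
  have h : ∀ a, sgn (!a) = -sgn a := by intro a; cases a <;> simp [sgn]
  simp [stp, flp, h]
  abel

/-- The steps `±e_i ± e_j` are isotropic: the mixed derivatives cancel in the sum. -/
lemma sum_stp (hu : ContDiff ℝ (⊤ : ℕ∞) u) (x : EuclideanSpace ℝ (Fin d)) :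
    ∑ k, -hess u x (stp d k) (stp d k) = -(8 * d * lap d u x) := by
  have h : ∀ i j : Fin d, ∑ a : Bool, ∑ b : Bool,
      -hess u x (stp d (i, j, a, b)) (stp d (i, j, a, b)) =
        -(4 * D2 d u i i x) - 4 * D2 d u j j x := by
    intro i j
    simp only [D2_eq hu, stp, sgn, Fintype.sum_bool, map_add, map_smul, add_apply, smul_apply,
      smul_eq_mul, if_true, Bool.false_eq_true, if_false]
    ring
  rw [Fintype.sum_prod_type]
  simp_rw [Fintype.sum_prod_type, h]
  simp only [Finset.sum_sub_distrib, Finset.sum_neg_distrib,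
    Finset.sum_const, Finset.card_univ, Fintype.card_fin, nsmul_eq_mul, ← Finset.mul_sum, lap]
  ring

/-- The limiting generator of the walk, in the normalisation of `tendsto_sub_avg`. -/
lemma sum_stp' (hd : 1 ≤ d) (hu : ContDiff ℝ (⊤ : ℕ∞) u) (x : EuclideanSpace ℝ (Fin d)) :
    (4 * (Fintype.card (Idx d) : ℝ))⁻¹ * ∑ k, -hess u x (stp d k) (stp d k) =
      -((2 * d : ℝ)⁻¹ * lap d u x) := by
  have : (d : ℝ) ≠ 0 := by positivity
  rw [sum_stp hu]
  simp only [Fintype.card_prod, Fintype.card_fin, Fintype.card_bool]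
  push_cast
  field_simp
  ring

lemma idx_nonempty (hd : 1 ≤ d) : Nonempty (Idx d) := ⟨(⟨0, hd⟩, ⟨0, hd⟩, true, true)⟩

lemma eLpNorm_neg' (f : EuclideanSpace ℝ (Fin d) → ℝ) (p : ℝ≥0∞) :
    eLpNorm (fun x => -f x) p volume = eLpNorm f p volume := eLpNorm_neg f p volume

/-- The Calderón–Zygmund inequality `‖D_{ij}u‖ ≤ C ‖Δu‖`. -/
lemma D2_Lp (d : ℕ) (hd : 1 ≤ d) {p : ℝ} (hp : 1 < p) :
    ∃ C : ℝ, 0 < C ∧ ∀ (u : EuclideanSpace ℝ (Fin d) → ℝ), ContDiff ℝ (⊤ : ℕ∞) u →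
      HasCompactSupport u → ∀ i j,
      eLpNorm (D2 d u i j) (ENNReal.ofReal p) volume ≤
        ENNReal.ofReal C * eLpNorm (lap d u) (ENNReal.ofReal p) volume := by
  have := idx_nonempty hd
  obtain ⟨C, hC, h⟩ := hess_Lp d (Idx d) hp
  have hp1 : 1 ≤ ENNReal.ofReal p := ENNReal.one_le_ofReal.2 hp.le
  refine ⟨C, hC, fun u hu hc i j => ?_⟩
  have key : ∀ k, eLpNorm (fun x => hess u x (stp d k) (stp d k)) (ENNReal.ofReal p) volume ≤
      ENNReal.ofReal C * eLpNorm (lap d u) (ENNReal.ofReal p) volume := by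
    intro k
    have := h (stp d) (flp d) (stp_flp d) u hu hc k
    simp only [sum_stp' hd hu] at this
    rw [eLpNorm_neg', eLpNorm_neg', eLpNorm_mul (by positivity)] at this
    refine this.trans ?_
    gcongr
    refine mul_le_of_le_one_left zero_le ?_
    rw [ENNReal.ofReal_le_one]
    refine inv_le_one_of_one_le₀ ?_
    have : (1 : ℝ) ≤ d := by exact_mod_cast hd
    linarith
  -- polarisation: `4 D_{ij} = D²[e_i + e_j] - D²[e_i - e_j]`, and both directions are steps
  have e : D2 d u i j = (fun x => (4⁻¹ : ℝ) *
      (hess u x (stp d (i, j, true, true)) (stp d (i, j, true, true)))) +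
      fun x => -((4⁻¹ : ℝ) * (hess u x (stp d (i, j, true, false)) (stp d (i, j, true, false)))) := by
    funext x
    have hs := hess_symm hu x (EuclideanSpace.single i 1) (EuclideanSpace.single j 1)
    simp only [D2_eq hu, stp, sgn, map_add, map_smul, add_apply, smul_apply, Pi.add_apply,
      smul_eq_mul, if_true, Bool.false_eq_true, if_false]
    linarith
  have hm : ∀ v, Continuous fun x => hess u x v v := hess_apply_continuous hu
  rw [e]
  have hm' : ∀ v, Continuous fun x => (4⁻¹ : ℝ) * hess u x v v := fun v =>
    continuous_const.mul (hm v)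
  refine (eLpNorm_add_le (hm' _).aestronglyMeasurable (hm' _).fun_neg.aestronglyMeasurable hp1).trans ?_
  rw [eLpNorm_neg', eLpNorm_mul (by positivity), eLpNorm_mul (by positivity), ← mul_add]
  refine (mul_le_mul_right (add_le_add (key _) (key _)) _).trans ?_
  rw [← two_mul, ← mul_assoc]
  refine mul_le_of_le_one_left zero_le ?_
  rw [← ENNReal.ofReal_ofNat, ← ENNReal.ofReal_mul (by norm_num), ENNReal.ofReal_le_one]
  norm_num

/-- Dissipativity of the discrete Laplacian `avg w - 1` on `L_p`: with `A = avg w` a contraction,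
`(λ + c) u = (λ u + c (u - A u)) + c A u`, and the norm of the last term is absorbed on the left. -/
lemma dissipative_avg {ι : Type} [Fintype ι] [Nonempty ι] (w : ι → EuclideanSpace ℝ (Fin d))
    (hu : IsCc u) {p : ℝ≥0∞} (hp : 1 ≤ p) {lam c : ℝ} (hl : 0 ≤ lam) (hc : 0 ≤ c) :
    ENNReal.ofReal lam * eLpNorm u p volume ≤
      eLpNorm (fun x => lam * u x + c * (u x - avg w u x)) p volume := by
  have hfin : ENNReal.ofReal c * eLpNorm u p volume ≠ ∞ :=
    ENNReal.mul_ne_top ENNReal.ofReal_ne_top (hu.1.memLp_of_hasCompactSupport hu.2).2.ne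
  have hA : IsCc (avg w u) := hu.avg w
  have h1 : IsCc fun x => lam * u x + c * (u x - avg w u x) :=
    (hu.const_mul lam).add ((hu.sub hA).const_mul c)
  have e : (fun x => (lam + c) * u x) =
      (fun x => lam * u x + c * (u x - avg w u x)) + fun x => c * avg w u x := by
    funext x; simp only [Pi.add_apply]; ring
  have h2 : ENNReal.ofReal (lam + c) * eLpNorm u p volume ≤
      eLpNorm (fun x => lam * u x + c * (u x - avg w u x)) p volume +
        ENNReal.ofReal c * eLpNorm u p volume := by
    rw [← eLpNorm_mul (by positivity), e]
    refine (eLpNorm_add_le h1.1.aestronglyMeasurable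
      (hA.const_mul c).1.aestronglyMeasurable hp).trans ?_
    rw [eLpNorm_mul hc]
    gcongr
    exact eLpNorm_avg_le w hu hp
  rw [ENNReal.ofReal_add hl hc, add_mul] at h2
  exact (ENNReal.add_le_add_iff_right hfin).1 h2

/-- Dissipativity of the Laplacian on `L_p`. -/
lemma dissipative (hd : 1 ≤ d) {p : ℝ} (hp : 1 < p) (hu : ContDiff ℝ (⊤ : ℕ∞) u)
    (hc : HasCompactSupport u) {lam : ℝ} (hl : 0 ≤ lam) :
    ENNReal.ofReal lam * eLpNorm u (ENNReal.ofReal p) volume ≤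
      eLpNorm (fun x => lap d u x - lam * u x) (ENNReal.ofReal p) volume := by
  have := idx_nonempty hd
  have hcc : IsCc u := ⟨hu.continuous, hc⟩
  have hd0 : (d : ℝ) ≠ 0 := by positivity
  have hlim := ((BddTendsto.of_isCc (hcc.const_mul lam)).add
    ((tendsto_sub_avg hu hc (stp d) (flp d) (stp_flp d)).const_mul (2 * d))).tendsto_eLpNorm
      (p := p) (by linarith)
  simp only [sum_stp' hd hu] at hlim
  have e : (fun x => lam * u x + 2 * d * -((2 * d : ℝ)⁻¹ * lap d u x)) =
      fun x => -(lap d u x - lam * u x) := by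
    funext x; field_simp; ring
  rw [e, eLpNorm_neg'] at hlim
  refine ge_of_tendsto' hlim fun n => ?_
  simp only [← mul_assoc]
  exact dissipative_avg (fun i => hn n • stp d i) hcc (ENNReal.one_le_ofReal.2 hp.le) hl
    (by positivity)

/-- `u(· + m e) - u - m (u(· + e) - u)` is a combination of about `m²` second differences. -/
lemma shift_taylor (hu : IsCc u) {p : ℝ≥0∞} (hp : 1 ≤ p) (e : EuclideanSpace ℝ (Fin d)) (m : ℕ) :
    eLpNorm (fun x => u (x + (m : ℝ) • e) - u x - m * dif e u x) p volume ≤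
      ENNReal.ofReal ((m : ℝ) ^ 2) * eLpNorm (sdif e u) p volume := by
  induction m with
  | zero => simp
  | succ m ih =>
    set R : ℕ → EuclideanSpace ℝ (Fin d) → ℝ :=
      fun m x => u (x + (m : ℝ) • e) - u x - m * dif e u x with hR
    have hRc : ∀ m, IsCc (R m) := fun m =>
      ((hu.shift _).sub hu).sub ((hu.dif e).const_mul _)
    have eq : R (m + 1) = (fun x => R m (x + e)) + fun x => -((m : ℝ) * sdif e u (x + e)) := by
      funext x
      have h1 : x + e + (m : ℝ) • e = x + ((m : ℝ) + 1) • e := by rw [add_smul, one_smul]; abel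
      simp only [hR, dif, sdif, Pi.add_apply, h1, add_sub_cancel_right]
      push_cast
      ring
    show eLpNorm (R (m + 1)) p volume ≤ _
    rw [eq]
    have hs := hu.sdif e
    refine (eLpNorm_add_le ((hRc m).shift e).1.aestronglyMeasurable
      ((hs.shift e).const_mul _).1.fun_neg.aestronglyMeasurable hp).trans ?_
    rw [eLpNorm_neg', eLpNorm_mul (by positivity), eLpNorm_shift (hRc m), eLpNorm_shift hs]
    refine (add_le_add_left ih _).trans ?_
    rw [← add_mul, ← ENNReal.ofReal_add (by positivity) (by positivity)]
    gcongr
    push_cast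
    nlinarith [(Nat.cast_nonneg m : (0 : ℝ) ≤ m)]

/-- Interpolation: a directional derivative is controlled by `u` and the pure second derivative. -/
lemma fderiv_Lp {p : ℝ} (hp : 1 < p) (hu : ContDiff ℝ (⊤ : ℕ∞) u)
    (hc : HasCompactSupport u) (v : EuclideanSpace ℝ (Fin d)) :
    eLpNorm (fun x => fderiv ℝ u x v) (ENNReal.ofReal p) volume ≤
      2 * eLpNorm u (ENNReal.ofReal p) volume +
        eLpNorm (fun x => hess u x v v) (ENNReal.ofReal p) volume := by
  have hcc : IsCc u := ⟨hu.continuous, hc⟩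
  have hp0 : 0 < p := by linarith
  have hp1 : 1 ≤ ENNReal.ofReal p := ENNReal.one_le_ofReal.2 hp.le
  rw [← eLpNorm_neg' fun x => hess u x v v]
  refine le_of_tendsto_of_tendsto' ((tendsto_dif hu hc v).tendsto_eLpNorm hp0)
    (((tendsto_sdif hu hc v).tendsto_eLpNorm hp0).const_add _) fun n => ?_
  have ht := shift_taylor hcc hp1 (hn n • v) (n + 1)
  push_cast at ht
  set R : EuclideanSpace ℝ (Fin d) → ℝ := fun x =>
    u (x + ((n : ℝ) + 1) • hn n • v) - u x - ((n : ℝ) + 1) * dif (hn n • v) u x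
  have hRc : IsCc R := ((hcc.shift _).sub hcc).sub ((hcc.dif _).const_mul _)
  have e : (fun x => ((n : ℝ) + 1) * dif (hn n • v) u x) =
      ((fun x => u (x + ((n : ℝ) + 1) • hn n • v)) - u) - R := by
    funext x; simp only [Pi.sub_apply, R]; ring
  have hsh := hcc.shift (((n : ℝ) + 1) • hn n • v)
  rw [e, eLpNorm_mul (by positivity)]
  refine (eLpNorm_sub_le (hsh.sub hcc).1.aestronglyMeasurable hRc.1.aestronglyMeasurable
    hp1).trans (add_le_add ?_ ht)
  refine (eLpNorm_sub_le hsh.1.aestronglyMeasurable hcc.1.aestronglyMeasurable hp1).trans ?_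
  rw [eLpNorm_shift hcc, two_mul]

/-- The gradient estimate in multiplicative-parameter form: `√λ ‖D_i u‖ ≤ 2 λ ‖u‖ + ‖D_{ii} u‖`. -/
lemma D1_Lp {p : ℝ} (hp : 1 < p) (hu : ContDiff ℝ (⊤ : ℕ∞) u)
    (hc : HasCompactSupport u) (i : Fin d) {lam : ℝ} (hl : 0 ≤ lam) :
    ENNReal.ofReal √lam * eLpNorm (D1 d u i) (ENNReal.ofReal p) volume ≤
      2 * (ENNReal.ofReal lam * eLpNorm u (ENNReal.ofReal p) volume) +
        eLpNorm (D2 d u i i) (ENNReal.ofReal p) volume := by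
  rcases hl.eq_or_lt with rfl | hl
  · simp
  have hs : 0 < √lam := Real.sqrt_pos.2 hl
  have hs2 : √lam * √lam = lam := Real.mul_self_sqrt hl.le
  -- the direction `λ^{-1/2} e_i` balances the two terms
  have h := fderiv_Lp hp hu hc ((√lam)⁻¹ • EuclideanSpace.single i (1 : ℝ))
  have e1 : (fun x => fderiv ℝ u x ((√lam)⁻¹ • EuclideanSpace.single i (1 : ℝ))) =
      fun x => (√lam)⁻¹ * D1 d u i x := by
    funext x; simp only [map_smul, smul_eq_mul, D1]
  have e2 : (fun x => hess u x ((√lam)⁻¹ • EuclideanSpace.single i (1 : ℝ))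
      ((√lam)⁻¹ • EuclideanSpace.single i (1 : ℝ))) = fun x => lam⁻¹ * D2 d u i i x := by
    funext x
    simp only [D2_eq hu, map_smul, smul_apply, smul_eq_mul]
    rw [← mul_assoc, ← mul_inv, hs2]
  rw [e1, e2, eLpNorm_mul (by positivity), eLpNorm_mul (by positivity)] at h
  have h' := mul_le_mul_right h (ENNReal.ofReal lam)
  rw [mul_add, ← mul_assoc, ← mul_assoc (ENNReal.ofReal lam) (ENNReal.ofReal lam⁻¹),
    ← ENNReal.ofReal_mul hl.le, ← ENNReal.ofReal_mul hl.le, mul_inv_cancel₀ hl.ne',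
    ENNReal.ofReal_one, one_mul, mul_left_comm] at h'
  convert h' using 3
  rw [eq_mul_inv_iff_mul_eq₀ hs.ne', hs2]

lemma sqrt_sum_sq_le {ι : Type} (s : Finset ι) (a : ι → ℝ) :
    √(∑ i ∈ s, a i ^ 2) ≤ ∑ i ∈ s, |a i| := by
  refine Real.sqrt_le_iff.2 ⟨Finset.sum_nonneg fun _ _ => abs_nonneg _, ?_⟩
  simpa only [sq_abs] using Finset.sum_sq_le_sq_sum_of_nonneg (s := s) (f := fun i => |a i|)
    fun _ _ => abs_nonneg _

lemma eLpNorm_sqrt_sum_le {ι : Type} (s : Finset ι) {F : ι → EuclideanSpace ℝ (Fin d) → ℝ}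
    (hF : ∀ i, Continuous (F i)) {p : ℝ≥0∞} (hp : 1 ≤ p) :
    eLpNorm (fun x => √(∑ i ∈ s, F i x ^ 2)) p volume ≤ ∑ i ∈ s, eLpNorm (F i) p volume := by
  have h1 : eLpNorm (fun x => √(∑ i ∈ s, F i x ^ 2)) p volume ≤
      eLpNorm (∑ i ∈ s, fun x => ‖F i x‖) p volume := by
    refine eLpNorm_mono_real fun x => ?_
    rw [Real.norm_of_nonneg (Real.sqrt_nonneg _), Finset.sum_apply]
    exact sqrt_sum_sq_le s fun i => F i x
  refine h1.trans ((eLpNorm_sum_le (fun i _ => (hF i).norm.aestronglyMeasurable) hp).trans ?_)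
  exact Finset.sum_le_sum fun i _ => (eLpNorm_norm (F i)).le

end Resolvent

/-- **A priori `L_p` estimate for the resolvent of the Laplacian:** for `d ≥ 1`, `p ∈ (1,∞)`
there is `N = N(d,p)` such that for every `λ ≥ 0` and `u ∈ C_c^∞(ℝ^d)`:
`‖D²u‖_{L_p} + √λ ‖Du‖_{L_p} + λ ‖u‖_{L_p} ≤ N ‖Δu − λu‖_{L_p}`. -/
theorem laplacian_resolvent_apriori (d : ℕ) (hd : 1 ≤ d) (p : ℝ) (hp : 1 < p) :
    ∃ N : ℝ, 0 < N ∧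
      ∀ (lam : ℝ), 0 ≤ lam →
        ∀ u : EuclideanSpace ℝ (Fin d) → ℝ, ContDiff ℝ (⊤ : ℕ∞) u → HasCompactSupport u →
          eLpNorm (hessNorm d u) (ENNReal.ofReal p) volume +
            ENNReal.ofReal (Real.sqrt lam) * eLpNorm (gradNorm d u) (ENNReal.ofReal p) volume +
            ENNReal.ofReal lam * eLpNorm u (ENNReal.ofReal p) volume ≤
          ENNReal.ofReal N *
            eLpNorm (fun x => lap d u x - lam * u x) (ENNReal.ofReal p) volume := by
  obtain ⟨C, hC, h⟩ := D2_Lp d hd hp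
  have hp1 : 1 ≤ ENNReal.ofReal p := ENNReal.one_le_ofReal.2 hp.le
  refine ⟨d * d * (C * 2) + d * (2 + C * 2) + 1, by positivity, fun lam hl u hu hc => ?_⟩
  set X := eLpNorm (fun x => lap d u x - lam * u x) (ENNReal.ofReal p) volume
  have hcc : IsCc u := ⟨hu.continuous, hc⟩
  have hD2 : ∀ i j, Continuous (D2 d u i j) := fun i j => by
    have : D2 d u i j = fun x =>
        hess u x (EuclideanSpace.single i 1) (EuclideanSpace.single j 1) := by
      funext x; exact D2_eq hu i j x
    rw [this]
    exact ((hess_continuous hu).clm_apply continuous_const).clm_apply continuous_const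
  have hD1 : ∀ i, Continuous (D1 d u i) := fun i =>
    (hu.continuous_fderiv (by simp)).clm_apply continuous_const
  have hlap : Continuous (lap d u) := continuous_finsetSum _ fun i _ => hD2 i i
  have hU : ENNReal.ofReal lam * eLpNorm u (ENNReal.ofReal p) volume ≤ X :=
    dissipative hd hp hu hc hl
  have hL : eLpNorm (lap d u) (ENNReal.ofReal p) volume ≤ 2 * X := by
    have e : lap d u = (fun x => lap d u x - lam * u x) + fun x => lam * u x := by
      funext x; simp
    rw [e]
    refine (eLpNorm_add_le (hlap.sub (hcc.const_mul lam).1).aestronglyMeasurable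
      (hcc.const_mul lam).1.aestronglyMeasurable hp1).trans ?_
    rw [eLpNorm_mul hl, two_mul]
    exact add_le_add (le_refl X) hU
  have hH : ∀ i j, eLpNorm (D2 d u i j) (ENNReal.ofReal p) volume ≤
      ENNReal.ofReal (C * 2) * X := fun i j => by
    refine (h u hu hc i j).trans ?_
    rw [ENNReal.ofReal_mul hC.le, mul_assoc, ENNReal.ofReal_ofNat]
    gcongr
  have hG : ∀ i, ENNReal.ofReal √lam * eLpNorm (D1 d u i) (ENNReal.ofReal p) volume ≤
      ENNReal.ofReal (2 + C * 2) * X := fun i => by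
    refine (D1_Lp hp hu hc i hl).trans ?_
    rw [ENNReal.ofReal_add (by norm_num) (by positivity), add_mul, ENNReal.ofReal_ofNat]
    gcongr
    exact hH i i
  have hhess : eLpNorm (hessNorm d u) (ENNReal.ofReal p) volume ≤
      ENNReal.ofReal (d * d * (C * 2)) * X := by
    have := eLpNorm_sqrt_sum_le (Finset.univ : Finset (Fin d × Fin d))
      (F := fun k => D2 d u k.1 k.2) (fun k => hD2 k.1 k.2) hp1
    simp only [Fintype.sum_prod_type] at this
    refine this.trans ((Finset.sum_le_sum fun i _ => Finset.sum_le_sum fun j _ => hH i j).trans ?_)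
    simp only [Finset.sum_const, Finset.card_univ, Fintype.card_fin, nsmul_eq_mul]
    rw [ENNReal.ofReal_mul (p := (d : ℝ) * d) (by positivity),
      ENNReal.ofReal_mul (p := (d : ℝ)) (by positivity),
      ENNReal.ofReal_natCast, mul_assoc, mul_assoc]
  have hgrad : ENNReal.ofReal √lam * eLpNorm (gradNorm d u) (ENNReal.ofReal p) volume ≤
      ENNReal.ofReal (d * (2 + C * 2)) * X := by
    refine (mul_le_mul_right (eLpNorm_sqrt_sum_le Finset.univ hD1 hp1) _).trans ?_
    rw [Finset.mul_sum]
    refine (Finset.sum_le_sum fun i _ => hG i).trans ?_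
    simp only [Finset.sum_const, Finset.card_univ, Fintype.card_fin, nsmul_eq_mul]
    rw [ENNReal.ofReal_mul (by positivity), ENNReal.ofReal_natCast, mul_assoc]
  rw [ENNReal.ofReal_add (by positivity) (by norm_num),
    ENNReal.ofReal_add (by positivity) (by positivity), ENNReal.ofReal_one, add_mul, add_mul,
    one_mul]
  exact add_le_add (add_le_add hhess hgrad) hU
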